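/- There exist constants c₁, c₂ ∈ ℕ such that for every 2-VASS V = (Q,T) there is a finite set S of linear path schemes over V with the following properties: (i) for all states p,q ∈ Q and all vectors u,v ∈ ℕ², p(u) →*_{ℕ²} q(v) holds if and only if p(u) →^S_{ℕ²} q(v) holds; (ii) every ρ ∈ S has length at most (|Q| + ‖T‖)^{c₁}; and (iii) every ρ ∈ S has at most c₂·|Q|² cycles. -/

import Mathlib

namespace VASS

/-- Integer vectors of dimension `d`. -/
abbrev Vec (d : ℕ) := Fin d → ℤ

/-- A transition of a `d`-VASS: source state, update vector, target state. -/
abbrev Trans (d : ℕ) := ℕ × Vec d × ℕ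

/-- The norm of a vector: maximum of absolute values of its components. -/
def vnorm {d : ℕ} (z : Vec d) : ℕ := Finset.univ.sup fun i => (z i).natAbs

/-- The norm of a transition set. -/
def tnorm {d : ℕ} (T : Finset (Trans d)) : ℕ := T.sup fun t => vnorm t.2.1

/-- The displacement of a word of transitions. -/
def disp {d : ℕ} (π : List (Trans d)) : Vec d := (π.map fun t => t.2.1).sum

/-- `IsPathFrom p q π` : `π` is a path from `p` to `q`. -/
def IsPathFrom {d : ℕ} : ℕ → ℕ → List (Trans d) → Prop
  | p, q, [] => p = q
  | p, q, t :: rest => t.1 = p ∧ IsPathFrom t.2.2 q rest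

/-- ℕ^d as a subset of ℤ^d. -/
def NatSet (d : ℕ) : Set (Vec d) := {v | ∀ i, 0 ≤ v i}

/-- `p(u) →^π_A q(v)`. -/
def Run {d : ℕ} (T : Finset (Trans d)) (A : Set (Vec d)) (p : ℕ) (u : Vec d)
    (q : ℕ) (v : Vec d) (π : List (Trans d)) : Prop :=
  (∀ t ∈ π, t ∈ T) ∧ IsPathFrom p q π ∧ u ∈ A ∧ v = u + disp π ∧
    ∀ i, 1 ≤ i → i ≤ π.length → u + disp (π.take i) ∈ A

/-- `p(u) →*_A q(v)`. -/
def Reach {d : ℕ} (T : Finset (Trans d)) (A : Set (Vec d)) (p : ℕ) (u : Vec d)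
    (q : ℕ) (v : Vec d) : Prop := ∃ π, Run T A p u q v π

/-- A linear path scheme `α₀ β₁* α₁ ⋯ β_k* α_k`, presented as the initial
segment `α₀` together with the list of pairs `(βᵢ, αᵢ)`. -/
abbrev LPS (d : ℕ) := List (Trans d) × List (List (Trans d) × List (Trans d))

/-- The underlying word `α₀ β₁ α₁ ⋯ β_k α_k` of a linear path scheme. -/
def lpsSupport {d : ℕ} (ρ : LPS d) : List (Trans d) :=
  ρ.1 ++ (ρ.2.map fun s => s.1 ++ s.2).flatten

/-- The length of a linear path scheme. -/
def lpsLen {d : ℕ} (ρ : LPS d) : ℕ := (lpsSupport ρ).length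

/-- The number of cycles of a linear path scheme. -/
def numCycles {d : ℕ} (ρ : LPS d) : ℕ := ρ.2.length

/-- `ρ` is a linear path scheme from `p` to `q` over the transition set `T`:
its underlying word uses transitions from `T` and is a path from `p` to `q`,
and each `βᵢ` is a cycle. -/
def IsLPSFrom {d : ℕ} (T : Finset (Trans d)) (p q : ℕ) (ρ : LPS d) : Prop :=
  (∀ t ∈ lpsSupport ρ, t ∈ T) ∧ IsPathFrom p q (lpsSupport ρ) ∧
    ∀ s ∈ ρ.2, s.1 ≠ [] ∧ ∃ r, IsPathFrom r r s.1

/-- The word `α₀ β₁^{e₁} α₁ ⋯ β_k^{e_k} α_k` of a linear path scheme. -/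
def lpsWord {d : ℕ} (ρ : LPS d) (e : List ℕ) : List (Trans d) :=
  ρ.1 ++ (List.zipWith (fun s n => (List.replicate n s.1).flatten ++ s.2) ρ.2 e).flatten

/-- Membership in the language of a linear path scheme. -/
def InLang {d : ℕ} (ρ : LPS d) (π : List (Trans d)) : Prop :=
  ∃ e : List ℕ, e.length = numCycles ρ ∧ π = lpsWord ρ e

/-- `p(u) →^S_A q(v)` for a finite set `S` of linear path schemes. -/
def SReach {d : ℕ} (T : Finset (Trans d)) (S : Finset (LPS d)) (A : Set (Vec d))
    (p : ℕ) (u : Vec d) (q : ℕ) (v : Vec d) : Prop :=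
  ∃ ρ ∈ S, ∃ π, InLang ρ π ∧ Run T A p u q v π

/-- δ(ρ): the set of displacements of words in the language of `ρ`. -/
def DispSet {d : ℕ} (ρ : LPS d) : Set (Vec d) := {z | ∃ π, InLang ρ π ∧ z = disp π}

/-- A quadrant of ℤ². -/
def IsQuadrant (Z : Set (Vec 2)) : Prop :=
  ∃ ε : Fin 2 → Bool, Z = {v | ∀ i, if ε i then 0 ≤ v i else v i ≤ 0}

/-- A linear path scheme is zigzag-free if the displacements of all its cycles
lie in a single quadrant. -/
def ZigzagFree (ρ : LPS 2) : Prop :=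
  ∃ Z, IsQuadrant Z ∧ ∀ s ∈ ρ.2, disp s.1 ∈ Z

/-!
Call a configuration high if both coordinates exceed a polynomial threshold and low otherwise.

A run between two high configurations with the same state can be reorganized freely. Cut its short
cycles off a skeleton of quadratic length, and cancel cycles against each other until all weights
lie in one orthant. There the two extreme directions generate a multiple of every weight, so up to
a polynomial remainder the cut-off cycles amount to iterating two loops. An extreme direction is
not itself the weight of a cycle, but some multiple of it is: if it is not parallel to its
summands, then a combination of the closed skeleton with one of them is. As the two loops move
every coordinate monotonically, the new run stays nonnegative because it is high at both ends.

A run along which one coordinate is small and the other is large is treated likewise in the finite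
graph that records the small coordinate; all its cycles have parallel weights, so the ends need not
agree. A low run alternates between such runs and a box with polynomially many configurations,
where repeated visits can be skipped; an excursion between two visits to the box has small
displacement, so its loops can be unrolled, and only the parts before the first and after the last
visit need stars.

An arbitrary run is cut at the first and the last high visit to a state. Everything in between
becomes a scheme with two cycles, and that state is not visited high afterwards, so induction on
the number of states gives linearly many cycles.
-/

/-! ### Polynomial growth -/

section PolyBounded

open Polynomial

/-- Functions on `ℕ` dominated by a polynomial. All constants of the proof are explicit functions of
`|Q| + ‖T‖`, and `fun_prop` checks that they grow polynomially. -/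
@[fun_prop]
def PolyBounded (f : ℕ → ℕ) : Prop := ∃ P : ℕ[X], ∀ x, f x ≤ P.eval x

namespace PolyBounded

variable {f g : ℕ → ℕ}

theorem eval_mono (P : ℕ[X]) : Monotone fun x => P.eval x := by
  intro x y h
  simp only [eval_eq_sum_range]
  gcongr

@[fun_prop]
theorem id : PolyBounded fun x => x := ⟨X, by simp⟩

@[fun_prop]
theorem const (c : ℕ) : PolyBounded fun _ => c := ⟨C c, by simp⟩

@[fun_prop]
theorem add (hf : PolyBounded f) (hg : PolyBounded g) : PolyBounded fun x => f x + g x := by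
  obtain ⟨P, hP⟩ := hf
  obtain ⟨R, hR⟩ := hg
  exact ⟨P + R, fun x => by simpa only [eval_add] using add_le_add (hP x) (hR x)⟩

@[fun_prop]
theorem mul (hf : PolyBounded f) (hg : PolyBounded g) : PolyBounded fun x => f x * g x := by
  obtain ⟨P, hP⟩ := hf
  obtain ⟨R, hR⟩ := hg
  exact ⟨P * R, fun x => by simpa only [eval_mul] using Nat.mul_le_mul (hP x) (hR x)⟩

@[fun_prop]
theorem pow (hf : PolyBounded f) (n : ℕ) : PolyBounded fun x => f x ^ n := by
  obtain ⟨P, hP⟩ := hf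
  exact ⟨P ^ n, fun x => by simpa only [eval_pow] using Nat.pow_le_pow_left (hP x) n⟩

@[fun_prop]
theorem comp (hf : PolyBounded f) (hg : PolyBounded g) : PolyBounded fun x => f (g x) := by
  obtain ⟨P, hP⟩ := hf
  obtain ⟨R, hR⟩ := hg
  exact ⟨P.comp R, fun x => by
    simpa only [eval_comp] using (hP (g x)).trans (eval_mono P (hR x))⟩

theorem exists_eval_le_pow (P : ℕ[X]) : ∃ k, ∀ x, 2 ≤ x → P.eval x ≤ x ^ k := by
  induction P using Polynomial.induction_on' with
  | add P R ihP ihR =>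
    obtain ⟨a, ha⟩ := ihP
    obtain ⟨b, hb⟩ := ihR
    refine ⟨a + b + 1, fun x hx => ?_⟩
    have hxa : x ^ a ≤ x ^ (a + b) := Nat.pow_le_pow_right (by omega) (by omega)
    have hxb : x ^ b ≤ x ^ (a + b) := Nat.pow_le_pow_right (by omega) (by omega)
    calc (P + R).eval x ≤ x ^ (a + b) + x ^ (a + b) := by
          rw [eval_add]
          exact add_le_add ((ha x hx).trans hxa) ((hb x hx).trans hxb)
      _ = x ^ (a + b) * 2 := (mul_two _).symm
      _ ≤ x ^ (a + b + 1) := by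
          rw [pow_succ]
          gcongr
  | monomial n c =>
    refine ⟨c + n, fun x hx => ?_⟩
    rw [eval_monomial, pow_add]
    gcongr
    exact Nat.lt_two_pow_self.le.trans (Nat.pow_le_pow_left hx c)

theorem exists_le_pow (hf : PolyBounded f) : ∃ k, ∀ x, 2 ≤ x → f x ≤ x ^ k := by
  obtain ⟨P, hP⟩ := hf
  obtain ⟨k, hk⟩ := exists_eval_le_pow P
  exact ⟨k, fun x hx => (hP x).trans (hk x hx)⟩

end PolyBounded

end PolyBounded

/-! ### Weighted walks -/

/-- `Walk E p q n g S`: there is a walk of length `n` from `p` to `q` along the edges of the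
weighted graph `E`, with total weight `g`, whose set of visited vertices is `S`. -/
inductive Walk {V G : Type*} [DecidableEq V] [AddCommMonoid G] (E : V → G → V → Prop) :
    V → V → ℕ → G → Finset V → Prop
  | nil (p : V) : Walk E p p 0 0 {p}
  | cons {p r q : V} {n : ℕ} {g g' : G} {S : Finset V} :
      E p g r → Walk E r q n g' S → Walk E p q (n + 1) (g + g') (insert p S)

/-- The weights of the closed walks of length at most `N` based at a vertex of `S`. -/
def shortCycles {V G : Type*} [DecidableEq V] [AddCommMonoid G] (E : V → G → V → Prop) (N : ℕ)
    (S : Finset V) : Set G :=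
  {c | ∃ r ∈ S, ∃ l S', l ≤ N ∧ Walk E r r l c S'}

section Walk

variable {V G : Type*} [DecidableEq V] [AddCommMonoid G] {E : V → G → V → Prop} {p q r : V}
  {n n' l : ℕ} {g g' c : G} {S S' F : Finset V}

theorem shortCycles_mono (hn : n ≤ n') (hS : S ⊆ S') :
    shortCycles E n S ⊆ shortCycles E n' S' := by
  rintro c ⟨r, hr, l, S'', hl, w⟩
  exact ⟨r, hS hr, l, S'', hl.trans hn, w⟩

namespace Walk

theorem copy (h : Walk E p q n g S) (hn : n = n') (hg : g = g') (hS : S = S') :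
    Walk E p q n' g' S' := by
  subst hn hg hS
  exact h

theorem head_mem (h : Walk E p q n g S) : p ∈ S := by
  cases h <;> simp

theorem trans (h : Walk E p q n g S) (h' : Walk E q r n' g' S') :
    Walk E p r (n + n') (g + g') (S ∪ S') := by
  induction h with
  | nil p =>
    refine h'.copy (by omega) (zero_add _).symm ?_
    rw [Finset.singleton_union, Finset.insert_eq_of_mem h'.head_mem]
  | cons e _ ih =>
    exact (cons e (ih h')).copy (by omega) (add_assoc _ _ _).symm (Finset.insert_union ..).symm

theorem split (h : Walk E p q n g S) (hr : r ∈ S) :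
    ∃ n₁ n₂ g₁ g₂ S₁ S₂, Walk E p r n₁ g₁ S₁ ∧ Walk E r q n₂ g₂ S₂ ∧
      n = n₁ + n₂ ∧ g = g₁ + g₂ ∧ S = S₁ ∪ S₂ := by
  induction h with
  | nil p =>
    obtain rfl := Finset.mem_singleton.1 hr
    exact ⟨0, 0, 0, 0, _, _, nil _, nil _, rfl, (add_zero 0).symm, (Finset.union_self _).symm⟩
  | @cons p r' q n g g' S e w ih =>
    rcases Finset.mem_insert.1 hr with rfl | hrS
    · exact ⟨0, n + 1, 0, g + g', _, _, nil _, cons e w, (zero_add _).symm, (zero_add _).symm,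
        by simp⟩
    · obtain ⟨n₁, n₂, g₁, g₂, S₁, S₂, w₁, w₂, rfl, rfl, rfl⟩ := ih hrS
      exact ⟨n₁ + 1, n₂, g + g₁, g₂, _, _, cons e w₁, w₂, by omega, (add_assoc _ _ _).symm,
        (Finset.insert_union ..).symm⟩

theorem insert_cycle (h : Walk E p q n g S) (hr : r ∈ S) (hc : Walk E r r l c S') :
    Walk E p q (n + l) (g + c) (S ∪ S') := by
  obtain ⟨n₁, n₂, g₁, g₂, S₁, S₂, w₁, w₂, rfl, rfl, rfl⟩ := h.split hr
  exact ((w₁.trans hc).trans w₂).copy (by omega) (by abel) (Finset.union_right_comm ..)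

theorem subset (h : Walk E p q n g S) (hE : ∀ p g r, E p g r → r ∈ F) (hp : p ∈ F) : S ⊆ F := by
  induction h with
  | nil p => exact Finset.singleton_subset_iff.2 hp
  | cons e _ ih => exact Finset.insert_subset hp (ih (hE _ _ _ e))

theorem exists_cycle (h : Walk E p q n g S) (hn : S.card ≤ n) :
    ∃ n' g' S' r l c S'', Walk E p q n' g' S' ∧ Walk E r r l c S'' ∧ r ∈ S' ∧ S' ⊆ S ∧ 1 ≤ l ∧
      n = n' + l ∧ g = g' + c := by
  induction h with
  | nil p => simp at hn
  | @cons p r' q n g g' S e w ih =>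
    by_cases hp : p ∈ S
    · obtain ⟨n₁, n₂, g₁, g₂, S₁, S₂, w₁, w₂, rfl, rfl, rfl⟩ := w.split hp
      exact ⟨n₂, g₂, S₂, p, n₁ + 1, g + g₁, _, w₂, cons e w₁, w₂.head_mem,
        Finset.subset_union_right.trans (Finset.subset_insert _ _), by omega, by omega, by abel⟩
    · rw [Finset.card_insert_of_notMem hp] at hn
      obtain ⟨n₁, g₁, S₁, r, l, c, S₂, w₁, w₂, hr, hS, hl, rfl, rfl⟩ := ih (by omega)
      exact ⟨n₁ + 1, g + g₁, _, r, l, c, S₂, cons e w₁, w₂, Finset.mem_insert_of_mem hr,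
        Finset.insert_subset_insert _ hS, hl, by omega, by abel⟩

theorem exists_shorter (h : Walk E p q n g S') (hS : S' ⊆ S) (hn : n ≤ S.card) :
    ∃ n' g' S'', ∃ C : Multiset G, Walk E p q n' g' S'' ∧ n' < S.card ∧ S'' ⊆ S ∧
      (∀ c ∈ C, c ∈ shortCycles E S.card S) ∧ g = g' + C.sum := by
  rcases hn.lt_or_eq with hlt | rfl
  · exact ⟨n, g, S', 0, h, hlt, hS, by simp, by simp⟩
  · obtain ⟨n₁, g₁, S₁, r, l, c, S₂, w₁, w₂, hr, hS₁, hl, hlen, rfl⟩ :=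
      h.exists_cycle (Finset.card_le_card hS)
    refine ⟨n₁, g₁, S₁, {c}, w₁, by omega, hS₁.trans hS, ?_, by simp⟩
    simpa using ⟨r, hS (hS₁ hr), l, S₂, by omega, w₂⟩

/-- The induction builds the walk from its end: a step to a vertex already visited is absorbed in a
short prefix, and a step to a new vertex freezes that prefix, so that every vertex stays visited. -/
theorem exists_prefix_decomposition (h : Walk E p q n g S) :
    ∃ m a gA SA nR gR, ∃ C : Multiset G, Walk E p m a gA SA ∧ a < S.card ∧ SA ⊆ S ∧
      Walk E m q nR gR S ∧ nR + S.card ≤ S.card * S.card ∧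
      (∀ c ∈ C, c ∈ shortCycles E S.card S) ∧ g = gA + gR + C.sum := by
  induction h with
  | nil p =>
    exact ⟨p, 0, 0, _, 0, 0, 0, nil _, by simp, subset_rfl, nil _, by simp, by simp, by simp⟩
  | @cons p r q n g g' S e w ih =>
    obtain ⟨m, a, gA, SA, nR, gR, C, wA, ha, hSA, wR, hnR, hC, rfl⟩ := ih
    by_cases hpS : p ∈ S
    · rw [Finset.insert_eq_of_mem hpS]
      obtain ⟨a', gA', SA', C', wA', ha', hSA', hC', hg⟩ :=
        (cons e wA).exists_shorter (Finset.insert_subset hpS hSA) ha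
      refine ⟨m, a', gA', SA', nR, gR, C' + C, wA', ha', hSA', wR, hnR, fun c hc => ?_, ?_⟩
      · exact (Multiset.mem_add.1 hc).elim (hC' c) (hC c)
      · rw [Multiset.sum_add, ← add_assoc, ← add_assoc, hg]
        abel
    · have hcard := Finset.card_insert_of_notMem hpS
      refine ⟨p, 0, 0, {p}, a + nR + 1, g + (gA + gR), C, nil _, by omega, by simp, ?_, ?_, ?_,
        by abel⟩
      · exact (cons e (wA.trans wR)).copy rfl rfl (by rw [Finset.union_eq_right.2 hSA])
      · rw [hcard]
        linarith
      · exact fun c hc => shortCycles_mono (by omega) (Finset.subset_insert _ _) (hC c hc)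

theorem exists_skeleton (h : Walk E p q n g S) :
    ∃ n₀ g₀, ∃ C : Multiset G, Walk E p q n₀ g₀ S ∧ n₀ ≤ S.card * S.card ∧
      (∀ c ∈ C, c ∈ shortCycles E S.card S) ∧ g = g₀ + C.sum := by
  obtain ⟨m, a, gA, SA, nR, gR, C, wA, ha, hSA, wR, hnR, hC, rfl⟩ := h.exists_prefix_decomposition
  exact ⟨a + nR, gA + gR, C, (wA.trans wR).copy rfl rfl (Finset.union_eq_right.2 hSA), by omega, hC,
    rfl⟩

end Walk

end Walk

/-! ### Vectors and bounded sums -/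

section Vector

variable {d M : ℕ}

theorem vnorm_le_iff {v : Vec d} : vnorm v ≤ M ↔ ∀ i, |v i| ≤ (M : ℤ) := by
  simp only [vnorm, Finset.sup_le_iff, Finset.mem_univ, true_implies, Int.abs_eq_natAbs,
    Nat.cast_le]

theorem natAbs_apply_le_vnorm (v : Vec d) (i : Fin d) : (v i).natAbs ≤ vnorm v :=
  Finset.le_sup (f := fun i => (v i).natAbs) (Finset.mem_univ i)

theorem abs_apply_le_vnorm (v : Vec d) (i : Fin d) : |v i| ≤ (vnorm v : ℤ) :=
  vnorm_le_iff.1 le_rfl i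

theorem vnorm_zero : vnorm (0 : Vec d) = 0 :=
  Nat.le_zero.1 (vnorm_le_iff.2 fun i => by simp)

theorem vnorm_add_le (u v : Vec d) : vnorm (u + v) ≤ vnorm u + vnorm v :=
  vnorm_le_iff.2 fun i => (abs_add_le _ _).trans
    (by exact_mod_cast add_le_add (abs_apply_le_vnorm u i) (abs_apply_le_vnorm v i))

theorem vnorm_sub_le (u v : Vec d) : vnorm (u - v) ≤ vnorm u + vnorm v :=
  vnorm_le_iff.2 fun i => (abs_sub _ _).trans
    (by exact_mod_cast add_le_add (abs_apply_le_vnorm u i) (abs_apply_le_vnorm v i))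

theorem nsmul_vec_apply (n : ℕ) (v : Vec d) (i : Fin d) : (n • v) i = n * v i := by
  rw [Pi.smul_apply, nsmul_eq_mul]

theorem vnorm_pos {v : Vec d} (hv : v ≠ 0) : 1 ≤ vnorm v := by
  obtain ⟨i, hi⟩ := Function.ne_iff.1 hv
  exact (Int.natAbs_pos.2 hi).trans_le (natAbs_apply_le_vnorm v i)

theorem vnorm_nsmul_le (n : ℕ) (v : Vec d) : vnorm (n • v) ≤ n * vnorm v :=
  vnorm_le_iff.2 fun i => by
    rw [nsmul_vec_apply, abs_mul, Nat.abs_cast, Nat.cast_mul]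
    exact mul_le_mul_of_nonneg_left (abs_apply_le_vnorm v i) (Nat.cast_nonneg n)

end Vector

/-- `v` is a sum of at most `k` elements of `X`, repetitions allowed. -/
def IsSumOfAtMost {G : Type*} [AddCommMonoid G] (X : Set G) (k : ℕ) (v : G) : Prop :=
  ∃ C : Multiset G, (∀ c ∈ C, c ∈ X) ∧ C.card ≤ k ∧ C.sum = v

namespace IsSumOfAtMost

section AddCommMonoid

variable {G : Type*} [AddCommMonoid G] {X : Set G} {k k' : ℕ} {v v' : G}

theorem zero : IsSumOfAtMost X k 0 := ⟨0, by simp, by simp, by simp⟩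

theorem single (h : v ∈ X) : IsSumOfAtMost X 1 v := ⟨{v}, by simpa using h, by simp, by simp⟩

theorem mono (h : IsSumOfAtMost X k v) (hk : k ≤ k') : IsSumOfAtMost X k' v := by
  obtain ⟨C, hCX, hCk, hC⟩ := h
  exact ⟨C, hCX, hCk.trans hk, hC⟩

theorem add (h : IsSumOfAtMost X k v) (h' : IsSumOfAtMost X k' v') :
    IsSumOfAtMost X (k + k') (v + v') := by
  obtain ⟨C, hCX, hCk, rfl⟩ := h
  obtain ⟨C', hCX', hCk', rfl⟩ := h'
  refine ⟨C + C', fun c hc => ?_, ?_, Multiset.sum_add _ _⟩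
  · exact (Multiset.mem_add.1 hc).elim (hCX c) (hCX' c)
  · rw [Multiset.card_add]
    exact add_le_add hCk hCk'

theorem sum (C : Multiset G) (h : ∀ c ∈ C, IsSumOfAtMost X k c) :
    IsSumOfAtMost X (C.card * k) C.sum := by
  induction C using Multiset.induction with
  | empty => exact zero
  | cons a s ih =>
    rw [Multiset.sum_cons, Multiset.card_cons, add_mul, one_mul, add_comm _ k]
    exact (h a (Multiset.mem_cons_self _ _)).add (ih fun c hc => h c (Multiset.mem_cons_of_mem hc))

theorem nsmul (h : IsSumOfAtMost X k v) (n : ℕ) : IsSumOfAtMost X (n * k) (n • v) := by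
  have := sum (Multiset.replicate n v) fun c hc => Multiset.eq_of_mem_replicate hc ▸ h
  rwa [Multiset.card_replicate, Multiset.sum_replicate] at this

end AddCommMonoid

theorem vnorm_le {d k M : ℕ} {X : Set (Vec d)} {v : Vec d} (h : IsSumOfAtMost X k v)
    (hX : ∀ x ∈ X, vnorm x ≤ M) : vnorm v ≤ k * M := by
  obtain ⟨C, hCX, hCk, rfl⟩ := h
  refine le_trans ?_ (Nat.mul_le_mul_right M hCk)
  clear hCk
  induction C using Multiset.induction with
  | empty => simp [vnorm_zero]
  | cons a s ih =>
    rw [Multiset.sum_cons, Multiset.card_cons, add_mul, one_mul, add_comm _ M]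
    exact (vnorm_add_le _ _).trans (add_le_add (hX a (hCX a (Multiset.mem_cons_self _ _)))
      (ih fun c hc => hCX c (Multiset.mem_cons_of_mem hc)))

end IsSumOfAtMost

theorem card_le_of_count_le {d M K : ℕ} {C : Multiset (Vec d)}
    (hM : ∀ c ∈ C, vnorm c ≤ M) (hK : ∀ c ∈ C, C.count c ≤ K) :
    C.card ≤ (2 * M + 1) ^ d * K := by
  have hsub : C.toFinset ⊆ Fintype.piFinset fun _ : Fin d => Finset.Icc (-(M : ℤ)) M := by
    intro c hc
    rw [Fintype.mem_piFinset]
    have hcM := hM c (Multiset.mem_toFinset.1 hc)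
    exact fun i => Finset.mem_Icc.2 (abs_le.1 (vnorm_le_iff.1 hcM i))
  have hcube : (Fintype.piFinset fun _ : Fin d => Finset.Icc (-(M : ℤ)) M).card
      = (2 * M + 1) ^ d := by
    simp only [Fintype.card_piFinset, Int.card_Icc, Finset.prod_const, Finset.card_univ,
      Fintype.card_fin]
    congr 1
    omega
  calc C.card = ∑ a ∈ C.toFinset, C.count a := C.toFinset_sum_count_eq.symm
    _ ≤ ∑ _a ∈ C.toFinset, K :=
        Finset.sum_le_sum fun a ha => hK a (Multiset.mem_toFinset.1 ha)
    _ = C.toFinset.card * K := by rw [Finset.sum_const, smul_eq_mul]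
    _ ≤ (2 * M + 1) ^ d * K := Nat.mul_le_mul_right _ ((Finset.card_le_card hsub).trans hcube.le)

theorem exists_blocks {α : Type*} {R : Multiset α → Prop} (hR : ¬ R 0) (C : Multiset α) :
    ∃ (L : Multiset (Multiset α)) (C₀ : Multiset α),
      C = L.join + C₀ ∧ (∀ B ∈ L, R B) ∧ ∀ B ≤ C₀, ¬ R B := by
  induction C using Multiset.strongInductionOn with
  | _ C ih =>
    by_cases h : ∃ B ≤ C, R B
    · obtain ⟨B, hBC, hB⟩ := h
      obtain ⟨C', rfl⟩ := Multiset.le_iff_exists_add.1 hBC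
      have hpos : B ≠ 0 := fun h => hR (h ▸ hB)
      obtain ⟨L, C₀, rfl, hL, hC₀⟩ := ih C' (lt_add_of_pos_left C' (pos_iff_ne_zero.2 hpos))
      refine ⟨B ::ₘ L, C₀, by rw [Multiset.join_cons, add_assoc], fun B' hB' => ?_, hC₀⟩
      exact (Multiset.mem_cons.1 hB').elim (fun h => h ▸ hB) (hL B')
    · push Not at h
      exact ⟨0, C, by simp, by simp, h⟩

theorem replicate_add_replicate_le {α : Type*} [DecidableEq α] {C : Multiset α} {x y : α}
    {a b : ℕ} (hxy : x ≠ y) (ha : a ≤ C.count x) (hb : b ≤ C.count y) :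
    Multiset.replicate a x + Multiset.replicate b y ≤ C := by
  rw [Multiset.le_iff_count]
  intro z
  rw [Multiset.count_add, Multiset.count_replicate, Multiset.count_replicate]
  grind

section Normalization

variable {d M k : ℕ} {X : Set (Vec d)} {C : Multiset (Vec d)}

/-- A multiset of vectors consisting of `x` and `y` whose `i`-th coordinates have opposite signs and
which are repeated so that their `i`-th coordinates cancel out. -/
def IsBalancedPair (i : Fin d) (B : Multiset (Vec d)) : Prop :=
  ∃ x y : Vec d, 0 < x i ∧ y i < 0 ∧
    B = Multiset.replicate (y i).natAbs x + Multiset.replicate (x i).natAbs y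

theorem IsBalancedPair.sum_apply {i : Fin d} {B : Multiset (Vec d)} (h : IsBalancedPair i B) :
    B.sum i = 0 := by
  obtain ⟨x, y, hx, hy, rfl⟩ := h
  simp only [Multiset.sum_add, Multiset.sum_replicate, Pi.add_apply, nsmul_vec_apply,
    Int.natCast_natAbs, abs_of_pos hx, abs_of_neg hy]
  ring

theorem IsBalancedPair.card_le {i : Fin d} {B : Multiset (Vec d)} (h : IsBalancedPair i B)
    (hM : ∀ c ∈ B, vnorm c ≤ M) : B.card ≤ 2 * M := by
  obtain ⟨x, y, hx, hy, rfl⟩ := h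
  have hxM := (natAbs_apply_le_vnorm x i).trans
    (hM x (by simp [Multiset.mem_replicate, hy.ne]))
  have hyM := (natAbs_apply_le_vnorm y i).trans
    (hM y (by simp [Multiset.mem_replicate, hx.ne']))
  rw [Multiset.card_add, Multiset.card_replicate, Multiset.card_replicate]
  omega

theorem not_isBalancedPair_zero {i : Fin d} : ¬ IsBalancedPair i 0 := by
  rintro ⟨x, y, hx, -, h⟩
  have := congrArg Multiset.card h
  rw [Multiset.card_zero, Multiset.card_add, Multiset.card_replicate,
    Multiset.card_replicate] at this
  omega

theorem exists_sign_of_no_balancedPair {i : Fin d} (hM : ∀ c ∈ C, vnorm c ≤ M)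
    (h : ∀ B ≤ C, ¬ IsBalancedPair i B) :
    ∃ σ : ℤˣ, ∀ c ∈ C, (σ : ℤ) * c i < 0 → C.count c ≤ M := by
  by_contra! hcon
  obtain ⟨y, hy, hyi, hyM⟩ := hcon 1
  obtain ⟨x, hx, hxi, hxM⟩ := hcon (-1)
  rw [Units.val_one, one_mul] at hyi
  rw [Units.val_neg, Units.val_one, neg_one_mul, neg_lt_zero] at hxi
  have hxy : x ≠ y := by
    rintro rfl
    exact lt_asymm hxi hyi
  have hxn := (natAbs_apply_le_vnorm x i).trans (hM x hx)
  have hyn := (natAbs_apply_le_vnorm y i).trans (hM y hy)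
  exact h _ (replicate_add_replicate_le hxy (by omega) (by omega)) ⟨x, y, hxi, hyi, rfl⟩

theorem exists_sign_normalization (hM : 1 ≤ M) (hCM : ∀ c ∈ C, vnorm c ≤ M)
    (hC : ∀ c ∈ C, IsSumOfAtMost X k c) (i : Fin d) :
    ∃ e, ∃ C' : Multiset (Vec d), ∃ σ : ℤˣ, C.sum = e + C'.sum ∧
      IsSumOfAtMost X ((2 * M + 1) ^ d * M * k) e ∧
      (∀ c ∈ C', IsSumOfAtMost X (2 * M * k) c ∧ 0 ≤ (σ : ℤ) * c i) ∧
      ∀ H : AddSubmonoid (Vec d), (∀ c ∈ C, c ∈ H) → ∀ c ∈ C', c ∈ H := by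
  obtain ⟨L, C₀, rfl, hL, hC₀⟩ := exists_blocks (R := IsBalancedPair i)
    not_isBalancedPair_zero C
  have hmem₀ : ∀ c ∈ C₀, c ∈ L.join + C₀ := fun c hc => Multiset.mem_add.2 (Or.inr hc)
  have hmemL : ∀ B ∈ L, ∀ c ∈ B, c ∈ L.join + C₀ := fun B hB c hc =>
    Multiset.mem_add.2 (Or.inl (Multiset.mem_join.2 ⟨B, hB, hc⟩))
  obtain ⟨σ, hσ⟩ := exists_sign_of_no_balancedPair (fun c hc => hCM c (hmem₀ c hc)) hC₀
  refine ⟨(C₀.filter fun c => (σ : ℤ) * c i < 0).sum,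
    L.map Multiset.sum + C₀.filter fun c => ¬ (σ : ℤ) * c i < 0, σ, ?_, ?_, ?_, ?_⟩
  · have hsplit := congrArg Multiset.sum
      (Multiset.filter_add_not (fun c : Vec d => (σ : ℤ) * c i < 0) C₀)
    rw [Multiset.sum_add] at hsplit
    rw [Multiset.sum_add, Multiset.sum_add, ← hsplit, Multiset.sum_join]
    abel
  · refine (IsSumOfAtMost.sum _ fun c hc => hC c (hmem₀ c (Multiset.mem_filter.1 hc).1)).mono
      (Nat.mul_le_mul_right k (card_le_of_count_le (fun c hc => ?_) fun c hc => ?_))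
    · exact hCM c (hmem₀ c (Multiset.mem_filter.1 hc).1)
    · obtain ⟨hc, hneg⟩ := Multiset.mem_filter.1 hc
      exact (Multiset.count_le_of_le c (Multiset.filter_le _ _)).trans (hσ c hc hneg)
  · intro c hc
    rcases Multiset.mem_add.1 hc with hc | hc
    · obtain ⟨B, hB, rfl⟩ := Multiset.mem_map.1 hc
      refine ⟨?_, by rw [(hL B hB).sum_apply, mul_zero]⟩
      exact (IsSumOfAtMost.sum B fun c hc => hC c (hmemL B hB c hc)).mono
        (Nat.mul_le_mul_right k ((hL B hB).card_le fun c hc => hCM c (hmemL B hB c hc)))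
    · obtain ⟨hc, hnonneg⟩ := Multiset.mem_filter.1 hc
      exact ⟨(hC c (hmem₀ c hc)).mono (Nat.le_mul_of_pos_left k (by omega)), not_lt.1 hnonneg⟩
  · intro H hH c hc
    rcases Multiset.mem_add.1 hc with hc | hc
    · obtain ⟨B, hB, rfl⟩ := Multiset.mem_map.1 hc
      exact H.multiset_sum_mem B fun c hc => hH c (hmemL B hB c hc)
    · exact hH c (hmem₀ c (Multiset.mem_filter.1 hc).1)

theorem exists_residue_add_nsmul {D : ℕ} (hD : D ≠ 0) {b₁ b₂ : Vec d}
    (hCM : ∀ c ∈ C, vnorm c ≤ M) (hC : ∀ c ∈ C, IsSumOfAtMost X k c)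
    (hb : ∀ c ∈ C, D • c ∈ AddSubmonoid.closure {b₁, b₂}) :
    ∃ e, ∃ n₁ n₂ : ℕ, IsSumOfAtMost X ((2 * M + 1) ^ d * D * k) e ∧
      C.sum = e + n₁ • b₁ + n₂ • b₂ := by
  obtain ⟨L, C₀, rfl, hL, hC₀⟩ := exists_blocks (R := fun B => ∃ x, B = Multiset.replicate D x)
    (fun ⟨x, h⟩ => hD.symm (by simpa using congrArg Multiset.card h)) C
  have hmem₀ : ∀ c ∈ C₀, c ∈ L.join + C₀ := fun c hc => Multiset.mem_add.2 (Or.inr hc)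
  have hcount : ∀ c ∈ C₀, C₀.count c ≤ D := fun c _ =>
    (not_le.1 fun h => hC₀ _ (Multiset.le_count_iff_replicate_le.1 h) ⟨c, rfl⟩).le
  have hLsum : L.join.sum ∈ AddSubmonoid.closure {b₁, b₂} := by
    rw [Multiset.sum_join]
    refine AddSubmonoid.multiset_sum_mem _ _ fun v hv => ?_
    obtain ⟨B, hB, rfl⟩ := Multiset.mem_map.1 hv
    obtain ⟨x, rfl⟩ := hL B hB
    rw [Multiset.sum_replicate]
    refine hb x (Multiset.mem_add.2 (Or.inl (Multiset.mem_join.2 ⟨_, hB, ?_⟩)))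
    exact Multiset.mem_replicate.2 ⟨hD, rfl⟩
  obtain ⟨n₁, n₂, hn⟩ := (AddSubmonoid.mem_closure_pair ..).1 hLsum
  refine ⟨C₀.sum, n₁, n₂, ?_, by rw [Multiset.sum_add, ← hn, add_comm, add_assoc]⟩
  exact (IsSumOfAtMost.sum _ fun c hc => hC c (hmem₀ c hc)).mono (Nat.mul_le_mul_right k
    (card_le_of_count_le (fun c hc => hCM c (hmem₀ c hc)) hcount))

end Normalization

/-! ### Loops in the plane -/

/-- The determinant of two planar vectors, as a linear form in the second one. -/
def cross (a : Vec 2) : Vec 2 →ₗ[ℤ] ℤ := a 0 • LinearMap.proj 1 - a 1 • LinearMap.proj 0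

theorem cross_apply (a b : Vec 2) : cross a b = a 0 * b 1 - a 1 * b 0 := rfl

theorem cross_self (a : Vec 2) : cross a a = 0 := by
  rw [cross_apply]
  ring

theorem cross_neg_comm (a b : Vec 2) : cross a b = -cross b a := by
  rw [cross_apply, cross_apply]
  ring

theorem natAbs_cross_le (a b : Vec 2) : (cross a b).natAbs ≤ 2 * vnorm a * vnorm b := by
  have hmul : ∀ i j, (a i * b j).natAbs ≤ vnorm a * vnorm b := fun i j => by
    rw [Int.natAbs_mul]
    exact Nat.mul_le_mul (natAbs_apply_le_vnorm a i) (natAbs_apply_le_vnorm b j)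
  calc (cross a b).natAbs ≤ (a 0 * b 1).natAbs + (a 1 * b 0).natAbs := Int.natAbs_sub_le _ _
    _ ≤ vnorm a * vnorm b + vnorm a * vnorm b := add_le_add (hmul 0 1) (hmul 1 0)
    _ = 2 * vnorm a * vnorm b := by ring

theorem mul_apply_comm_of_cross_eq_zero {a b : Vec 2} (h : cross a b = 0) (i j : Fin 2) :
    a i * b j = b i * a j := by
  rw [cross_apply] at h
  fin_cases i <;> fin_cases j <;> simp <;> linarith

/-- The closed orthant of `ℤ^d` with sign pattern `σ`. -/
def orthant {d : ℕ} (σ : Fin d → ℤˣ) : AddSubmonoid (Vec d) where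
  carrier := {v | ∀ i, 0 ≤ (σ i : ℤ) * v i}
  zero_mem' i := by simp
  add_mem' hu hv i := by
    rw [Pi.add_apply, mul_add]
    exact add_nonneg (hu i) (hv i)

/-- The sum of the coordinates of `v` after the reflections that map `orthant σ` to the nonnegative
orthant. -/
def signedSum {d : ℕ} (σ : Fin d → ℤˣ) (v : Vec d) : ℤ := ∑ i, (σ i : ℤ) * v i

section Orthant

variable {d : ℕ} {σ : Fin d → ℤˣ} {v : Vec d}

theorem signedSum_nonneg (hv : v ∈ orthant σ) : 0 ≤ signedSum σ v :=
  Finset.sum_nonneg fun i _ => hv i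

theorem signedSum_pos (hv : v ∈ orthant σ) (h0 : v ≠ 0) : 0 < signedSum σ v := by
  obtain ⟨i, hi⟩ := Function.ne_iff.1 h0
  refine Finset.sum_pos' (fun i _ => hv i) ⟨i, Finset.mem_univ i, (hv i).lt_of_ne' ?_⟩
  exact mul_ne_zero (σ i).ne_zero hi

theorem signedSum_le (σ : Fin d → ℤˣ) (v : Vec d) : signedSum σ v ≤ d * vnorm v := by
  calc signedSum σ v ≤ ∑ _i : Fin d, (vnorm v : ℤ) := Finset.sum_le_sum fun i _ => by
        refine (le_abs_self _).trans ?_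
        rw [abs_mul, Int.isUnit_iff_abs_eq.1 (σ i).isUnit, one_mul]
        exact abs_apply_le_vnorm v i
    _ = d * vnorm v := by simp

end Orthant

/-- The slope of a planar vector in `orthant σ`, normalized to lie in `[0, 1]`; it orders the
nonzero vectors of the orthant by angle. -/
def slope (σ : Fin 2 → ℤˣ) (v : Vec 2) : ℚ := ((σ 0 : ℤ) * v 0 : ℤ) / signedSum σ v

section Cone

variable {M : ℕ} {σ : Fin 2 → ℤˣ} {a b c d₁ d₂ : Vec 2} {C : Multiset (Vec 2)}

theorem slope_le_slope_iff (ha : a ∈ orthant σ) (ha0 : a ≠ 0) (hb : b ∈ orthant σ) (hb0 : b ≠ 0) :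
    slope σ a ≤ slope σ b ↔ 0 ≤ (σ 0 * σ 1 : ℤ) * cross b a := by
  rw [slope, slope, div_le_div_iff₀ (by exact_mod_cast signedSum_pos ha ha0)
    (by exact_mod_cast signedSum_pos hb hb0), ← sub_nonneg]
  norm_cast
  have hcross : (σ 0 : ℤ) * b 0 * signedSum σ a - (σ 0 : ℤ) * a 0 * signedSum σ b
      = (σ 0 * σ 1 : ℤ) * cross b a := by
    simp only [signedSum, Fin.sum_univ_two, cross_apply]
    ring
  rw [hcross, Units.val_mul]

theorem nsmul_mem_closure_pair (h₁₂ : 0 ≤ (σ 0 * σ 1 : ℤ) * cross d₁ d₂)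
    (h₁ : 0 ≤ (σ 0 * σ 1 : ℤ) * cross d₁ c)
    (h₂ : 0 ≤ (σ 0 * σ 1 : ℤ) * cross c d₂) :
    (cross d₁ d₂).natAbs • c ∈ AddSubmonoid.closure {d₁, d₂} := by
  have habs : ∀ z : ℤ, 0 ≤ (σ 0 * σ 1 : ℤ) * z → (z.natAbs : ℤ) = (σ 0 * σ 1 : ℤ) * z := by
    intro z hz
    rw [Int.natCast_natAbs, ← abs_of_nonneg hz, abs_mul, abs_mul,
      Int.isUnit_iff_abs_eq.1 (σ 0).isUnit, Int.isUnit_iff_abs_eq.1 (σ 1).isUnit, one_mul, one_mul]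
  refine (AddSubmonoid.mem_closure_pair ..).2 ⟨(cross c d₂).natAbs, (cross d₁ c).natAbs, ?_⟩
  ext i
  rw [Pi.add_apply, nsmul_vec_apply, nsmul_vec_apply, nsmul_vec_apply, habs _ h₁₂, habs _ h₁,
    habs _ h₂, cross_apply, cross_apply, cross_apply]
  fin_cases i <;> simp <;> ring

theorem nsmul_mem_closure_of_cross_eq_zero (hd : d₁ ∈ orthant σ) (hc : c ∈ orthant σ)
    (h : cross d₁ c = 0) : (signedSum σ d₁).toNat • c ∈ AddSubmonoid.closure {d₁} := by
  refine AddSubmonoid.mem_closure_singleton.2 ⟨(signedSum σ c).toNat, ?_⟩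
  ext i
  rw [nsmul_vec_apply, nsmul_vec_apply, Int.toNat_of_nonneg (signedSum_nonneg hd),
    Int.toNat_of_nonneg (signedSum_nonneg hc), signedSum, signedSum, Finset.sum_mul, Finset.sum_mul]
  refine Finset.sum_congr rfl fun j _ => ?_
  rw [mul_assoc, mul_assoc, mul_apply_comm_of_cross_eq_zero h j i]

theorem exists_generators (hC0 : C ≠ 0) (hC : ∀ c ∈ C, c ∈ orthant σ ∧ c ≠ 0 ∧ vnorm c ≤ M) :
    ∃ d₁ ∈ C, ∃ d₂ ∈ C, ∃ D : ℕ, 1 ≤ D ∧ D ≤ 2 * M ^ 2 ∧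
      ∀ c ∈ C, D • c ∈ AddSubmonoid.closure {d₁, d₂} := by
  have hne : C.toFinset.Nonempty := Multiset.toFinset_nonempty.2 hC0
  obtain ⟨d₁, hd₁, hmax⟩ := Finset.exists_max_image _ (slope σ) hne
  obtain ⟨d₂, hd₂, hmin⟩ := Finset.exists_min_image _ (slope σ) hne
  simp only [Multiset.mem_toFinset] at hd₁ hd₂ hmax hmin
  obtain ⟨ho₁, h0₁, hM₁⟩ := hC d₁ hd₁
  obtain ⟨ho₂, h0₂, hM₂⟩ := hC d₂ hd₂
  have hcr₁ : ∀ c ∈ C, 0 ≤ (σ 0 * σ 1 : ℤ) * cross d₁ c := fun c hc =>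
    (slope_le_slope_iff (hC c hc).1 (hC c hc).2.1 ho₁ h0₁).1 (hmax c hc)
  refine ⟨d₁, hd₁, d₂, hd₂, ?_⟩
  by_cases hz : cross d₁ d₂ = 0
  · refine ⟨(signedSum σ d₁).toNat, by have := signedSum_pos ho₁ h0₁; omega, ?_, fun c hc => ?_⟩
    · have hsum := signedSum_le σ d₁
      have hpos := (vnorm_pos h0₁).trans hM₁
      have : 2 * M ≤ 2 * M ^ 2 := by nlinarith
      omega
    · obtain ⟨ho, h0, -⟩ := hC c hc
      have hle : slope σ d₁ ≤ slope σ c := le_trans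
        ((slope_le_slope_iff ho₁ h0₁ ho₂ h0₂).2 (by rw [cross_neg_comm, hz]; simp)) (hmin c hc)
      have hnonpos := (slope_le_slope_iff ho₁ h0₁ ho h0).1 hle
      rw [cross_neg_comm, mul_neg, neg_nonneg] at hnonpos
      have hcross := (mul_eq_zero.1 (le_antisymm hnonpos (hcr₁ c hc))).resolve_left
        (mul_ne_zero (σ 0).ne_zero (σ 1).ne_zero)
      exact AddSubmonoid.closure_mono (by simp) (nsmul_mem_closure_of_cross_eq_zero ho₁ ho hcross)
  · refine ⟨(cross d₁ d₂).natAbs, Int.natAbs_pos.2 hz, ?_, fun c hc => ?_⟩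
    · calc (cross d₁ d₂).natAbs ≤ 2 * vnorm d₁ * vnorm d₂ := natAbs_cross_le d₁ d₂
        _ ≤ 2 * M * M := by gcongr
        _ = 2 * M ^ 2 := by ring
    · exact nsmul_mem_closure_pair (hcr₁ d₂ hd₂) (hcr₁ c hc)
        ((slope_le_slope_iff ho₂ h0₂ (hC c hc).1 (hC c hc).2.1).1 (hmin c hc))

end Cone

section Combination

variable {d z : Vec 2} {B : Multiset (Vec 2)}

theorem exists_mem_map_pos {G : Type*} [AddCommMonoid G] (f : G →+ ℤ) {B : Multiset G}
    (h : 0 < f B.sum) : ∃ c ∈ B, 0 < f c := by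
  by_contra! hcon
  rw [map_multiset_sum] at h
  refine h.not_ge ((Multiset.sum_le_card_nsmul _ 0 fun x hx => ?_).trans_eq (nsmul_zero _))
  obtain ⟨c, hc, rfl⟩ := Multiset.mem_map.1 hx
  exact hcon c hc

theorem exists_mem_map_mul_nonpos {G : Type*} [AddCommGroup G] (f : G →+ ℤ) {B : Multiset G}
    (h : f B.sum = 0) {c : G} (hc : c ∈ B) (hfc : f c ≠ 0) (y : ℤ) :
    ∃ c' ∈ B, f c' ≠ 0 ∧ f c' * y ≤ 0 := by
  by_cases hy : f c * y ≤ 0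
  · exact ⟨c, hc, hfc, hy⟩
  obtain ⟨B, rfl⟩ := Multiset.exists_cons_of_mem hc
  rw [Multiset.sum_cons, map_add, add_comm, add_eq_zero_iff_eq_neg] at h
  obtain ⟨c', hc', hneg⟩ := exists_mem_map_pos (-f c • f) (B := B) (by
    simpa [h, ← sq] using sq_pos_of_ne_zero hfc)
  rw [AddMonoidHom.smul_apply, smul_eq_mul] at hneg
  refine ⟨c', Multiset.mem_cons_of_mem hc', fun h => by simp [h] at hneg, ?_⟩
  nlinarith [mul_pos hneg (not_le.1 hy), sq_nonneg (f c), sq_pos_of_ne_zero hfc]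

theorem exists_nsmul_eq_nsmul_of_cross_eq_zero (hd : B.sum ≠ 0)
    (hB : ∀ c ∈ B, cross B.sum c = 0) :
    ∃ c ∈ B, ∃ l a : ℕ, 1 ≤ l ∧ l ≤ vnorm c ∧ a ≤ vnorm B.sum ∧ l • B.sum = a • c := by
  obtain ⟨i, hi⟩ := Function.ne_iff.1 hd
  obtain ⟨c, hc, hpos⟩ := exists_mem_map_pos (B.sum i • Pi.evalAddMonoidHom (fun _ => ℤ) i) (B := B)
    (by simpa [← sq] using sq_pos_of_ne_zero hi)
  replace hpos : 0 < B.sum i * c i := hpos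
  refine ⟨c, hc, (c i).natAbs, (B.sum i).natAbs, Int.natAbs_pos.2 (right_ne_zero_of_mul hpos.ne'),
    natAbs_apply_le_vnorm c i, natAbs_apply_le_vnorm _ i, ?_⟩
  ext j
  have hpar := mul_apply_comm_of_cross_eq_zero (hB c hc) i j
  rw [nsmul_vec_apply, nsmul_vec_apply, Int.natCast_natAbs, Int.natCast_natAbs]
  rcases pos_and_pos_or_neg_and_neg_of_mul_pos hpos with ⟨hdi, hci⟩ | ⟨hdi, hci⟩
  · rw [abs_of_pos hdi, abs_of_pos hci, hpar]
  · rw [abs_of_neg hdi, abs_of_neg hci, neg_mul, neg_mul, hpar]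

theorem exists_nsmul_eq_of_cross_eq_zero (hd : d ≠ 0) (h : cross d z = 0) :
    ∃ a n l : ℕ, 1 ≤ a ∧ a ≤ vnorm d ∧ n ≤ vnorm z + 1 ∧ 1 ≤ l ∧ l ≤ 2 * vnorm z + 1 ∧
      l • d = a • z + n • d := by
  obtain ⟨i, hi⟩ := Function.ne_iff.1 hd
  have hz := natAbs_apply_le_vnorm z i
  have hsign : ((d i).sign * z i).natAbs = (z i).natAbs := by
    rw [Int.natAbs_mul, Int.natAbs_sign_of_ne_zero hi, one_mul]
  refine ⟨(d i).natAbs, (z i).natAbs + 1, ((d i).sign * z i + ((z i).natAbs + 1 : ℕ)).toNat,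
    Int.natAbs_pos.2 hi, natAbs_apply_le_vnorm d i, by omega, by omega, by omega, ?_⟩
  ext j
  rw [Pi.add_apply, nsmul_vec_apply, nsmul_vec_apply, nsmul_vec_apply,
    Int.toNat_of_nonneg (by omega), Int.natCast_natAbs (d i), ← Int.sign_mul_self_eq_abs (d i)]
  linear_combination -(d i).sign * mul_apply_comm_of_cross_eq_zero h i j

end Combination

/-- `b` can be realized as a loop next to a skeleton of weight `t`: either it is a multiple of a
single vector of `X`, or `X` spans the plane and `b` combines some copies of `t` with boundedly many
vectors of `X`. -/
def Loopable (X : Set (Vec 2)) (t : Vec 2) (k : ℕ) (b : Vec 2) : Prop :=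
  (∃ c ∈ X, ∃ a ≤ k, b = a • c) ∨
    (∃ c ∈ X, ∃ c' ∈ X, cross c c' ≠ 0) ∧
      ∃ x v, 1 ≤ x ∧ x ≤ k ∧ IsSumOfAtMost X k v ∧ b = x • t + v

section Loopable

variable {X : Set (Vec 2)} {t d : Vec 2} {k K M : ℕ}

theorem Loopable.zero (hX : X.Nonempty) : Loopable X t k 0 := by
  obtain ⟨c, hc⟩ := hX
  exact Or.inl ⟨c, hc, 0, k.zero_le, (zero_nsmul c).symm⟩

theorem exists_cross_ne_zero {c : Vec 2} {B : Multiset (Vec 2)} (h : cross B.sum c ≠ 0) :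
    ∃ c' ∈ B, cross c c' ≠ 0 := by
  by_contra! hcon
  refine h ?_
  rw [cross_neg_comm, map_multiset_sum, Multiset.sum_eq_zero, neg_zero]
  intro z hz
  obtain ⟨a, ha, rfl⟩ := Multiset.mem_map.1 hz
  exact hcon a ha

/-- When `d` is not parallel to all its summands, one of them lies on the other side of `d` than
`t`; a combination of it with `t` is then parallel to `d`. -/
theorem exists_nsmul_eq_nsmul_add {c : Vec 2} (hd : d ≠ 0) (hc : cross d c ≠ 0)
    (hct : cross d c * cross d t ≤ 0) (hdK : vnorm d ≤ K) (hcM : vnorm c ≤ M) (htM : vnorm t ≤ M) :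
    ∃ l x y n : ℕ, 1 ≤ l ∧ l ≤ 8 * K * M ^ 2 + 1 ∧ 1 ≤ x ∧ x ≤ 2 * K ^ 2 * M ∧
      y ≤ 2 * K ^ 2 * M ∧ n ≤ 4 * K * M ^ 2 + 1 ∧ l • d = x • t + (y • c + n • d) := by
  have hcross : ∀ v, vnorm v ≤ M → (cross d v).natAbs ≤ 2 * K * M := fun v hv =>
    (natAbs_cross_le d v).trans (by gcongr)
  set z : Vec 2 := (cross d c).natAbs • t + (cross d t).natAbs • c with hz
  have hdz : cross d z = 0 := by
    rw [hz, map_add, map_nsmul, map_nsmul, nsmul_eq_mul, nsmul_eq_mul, Int.natCast_natAbs,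
      Int.natCast_natAbs]
    rcases mul_nonpos_iff.1 hct with ⟨hc, ht⟩ | ⟨hc, ht⟩
    · rw [abs_of_nonneg hc, abs_of_nonpos ht]
      ring
    · rw [abs_of_nonpos hc, abs_of_nonneg ht]
      ring
  have hzM : vnorm z ≤ 4 * K * M ^ 2 := by
    calc vnorm z ≤ (cross d c).natAbs * vnorm t + (cross d t).natAbs * vnorm c :=
          (vnorm_add_le _ _).trans (add_le_add (vnorm_nsmul_le _ _) (vnorm_nsmul_le _ _))
      _ ≤ 2 * K * M * M + 2 * K * M * M := by
          gcongr
          exacts [hcross c hcM, hcross t htM]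
      _ = 4 * K * M ^ 2 := by ring
  obtain ⟨a, n, l, ha, had, hn, hl, hlz, hld⟩ := exists_nsmul_eq_of_cross_eq_zero hd hdz
  have hmul : ∀ v, vnorm v ≤ M → a * (cross d v).natAbs ≤ 2 * K ^ 2 * M := fun v hv =>
    (Nat.mul_le_mul (had.trans hdK) (hcross v hv)).trans_eq (by ring)
  refine ⟨l, a * (cross d c).natAbs, a * (cross d t).natAbs, n, hl, ?_,
    Nat.mul_pos ha (Int.natAbs_pos.2 hc), hmul c hcM, hmul t htM, by omega, ?_⟩
  · linarith
  · rw [hld, hz, smul_add, smul_smul, smul_smul, add_assoc]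

theorem exists_nsmul_loopable (hX : ∀ c ∈ X, vnorm c ≤ M) (ht : vnorm t ≤ M) (hd : d ≠ 0)
    (hdK : vnorm d ≤ K) (hdX : IsSumOfAtMost X k d) :
    ∃ l, 1 ≤ l ∧ l ≤ 8 * K * M ^ 2 + 1 + M ∧
      Loopable X t (2 * K ^ 2 * M + (4 * K * M ^ 2 + 1) * k) (l • d) := by
  obtain ⟨B, hBX, -, rfl⟩ := id hdX
  by_cases hpar : ∀ c ∈ B, cross B.sum c = 0
  · obtain ⟨c, hc, l, a, hl, hlc, ha, hla⟩ := exists_nsmul_eq_nsmul_of_cross_eq_zero hd hpar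
    have hcM := hX c (hBX c hc)
    refine ⟨l, hl, by omega, Or.inl ⟨c, hBX c hc, a, ?_, hla⟩⟩
    have hK : K * 1 ≤ K * (2 * K * M) := by
      gcongr
      exact Nat.mul_pos (Nat.mul_pos two_pos ((vnorm_pos hd).trans hdK)) (by omega)
    linarith [Nat.zero_le ((4 * K * M ^ 2 + 1) * k)]
  · push Not at hpar
    obtain ⟨c₀, hc₀, hne₀⟩ := hpar
    obtain ⟨c, hc, hne, hct⟩ := exists_mem_map_mul_nonpos (cross B.sum).toAddMonoidHom
      (cross_self _) hc₀ hne₀ (cross B.sum t)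
    obtain ⟨l, x, y, n, hl, hlb, hx, hxb, hyb, hnb, heq⟩ :=
      exists_nsmul_eq_nsmul_add hd hne hct hdK (hX c (hBX c hc)) ht
    obtain ⟨c', hc', hcc'⟩ := exists_cross_ne_zero hne
    refine ⟨l, hl, by omega, Or.inr ⟨⟨c, hBX c hc, c', hBX c' hc', hcc'⟩, x, _, hx,
      hxb.trans le_self_add, ?_, heq⟩⟩
    refine (((IsSumOfAtMost.single (hBX c hc)).nsmul y).add (hdX.nsmul n)).mono ?_
    rw [mul_one]
    gcongr

end Loopable

section Constants

variable (M : ℕ)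

/-- Bounds the number of short cycles summed up in one vector of the orthant normal form. -/
def generatorCount : ℕ := 8 * M ^ 3

/-- Bounds the norm of the vectors of the orthant normal form. -/
def generatorNorm : ℕ := 8 * M ^ 4

/-- Bounds the multiple that turns a generator into a loop. -/
def loopMultiple : ℕ := 8 * generatorNorm M * M ^ 2 + 1 + M

/-- Bounds the number of skeleton copies and of short cycles that form a loop. -/
def loopBound : ℕ :=
  2 * generatorNorm M ^ 2 * M + (4 * generatorNorm M * M ^ 2 + 1) * generatorCount M

/-- Bounds the number of short cycles left over by the orthant normal form. -/
def orthantResidue : ℕ := (2 * M + 1) ^ 2 * M + (2 * (2 * M * M) + 1) ^ 2 * (2 * M * M) * (2 * M)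

/-- Bounds the number of short cycles left over after extracting the two loops. -/
def residueBound : ℕ :=
  orthantResidue M + (2 * generatorNorm M + 1) ^ 2 *
    (2 * generatorNorm M ^ 2 * (loopMultiple M * loopMultiple M)) * generatorCount M

@[fun_prop]
theorem polyBounded_generatorCount : PolyBounded generatorCount := by
  unfold generatorCount
  fun_prop

@[fun_prop]
theorem polyBounded_generatorNorm : PolyBounded generatorNorm := by
  unfold generatorNorm
  fun_prop

@[fun_prop]
theorem polyBounded_loopMultiple : PolyBounded loopMultiple := by
  unfold loopMultiple
  fun_prop

@[fun_prop]
theorem polyBounded_loopBound : PolyBounded loopBound := by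
  unfold loopBound
  fun_prop

@[fun_prop]
theorem polyBounded_orthantResidue : PolyBounded orthantResidue := by
  unfold orthantResidue
  fun_prop

@[fun_prop]
theorem polyBounded_residueBound : PolyBounded residueBound := by
  unfold residueBound
  fun_prop

end Constants

section OrthantLoops

variable {X : Set (Vec 2)} {M : ℕ} {C : Multiset (Vec 2)} {t : Vec 2}

theorem exists_orthant_normalization (hM : 1 ≤ M) (hX : ∀ c ∈ X, vnorm c ≤ M)
    (hC : ∀ c ∈ C, c ∈ X) :
    ∃ (σ : Fin 2 → ℤˣ) (e : Vec 2) (C' : Multiset (Vec 2)),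
      C.sum = e + C'.sum ∧ IsSumOfAtMost X (orthantResidue M) e ∧
      ∀ c ∈ C', c ∈ orthant σ ∧ c ≠ 0 ∧ IsSumOfAtMost X (generatorCount M) c := by
  obtain ⟨e₁, C₁, σ₀, hsum₁, he₁, hC₁, -⟩ := exists_sign_normalization hM
    (fun c hc => hX c (hC c hc)) (fun c hc => IsSumOfAtMost.single (hC c hc)) 0
  rw [mul_one] at he₁
  simp only [mul_one] at hC₁
  obtain ⟨e₂, C₂, σ₁, hsum₂, he₂, hC₂, hpreserved⟩ := exists_sign_normalization
    (M := 2 * M * M) (Nat.mul_pos (Nat.mul_pos two_pos hM) hM)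
    (fun c hc => (hC₁ c hc).1.vnorm_le hX) (fun c hc => (hC₁ c hc).1) 1
  have hsign₀ : ∀ c ∈ C₂, 0 ≤ (σ₀ : ℤ) * c 0 := hpreserved
    ((AddSubmonoid.nonneg ℤ).comap ((σ₀ : ℤ) • Pi.evalAddMonoidHom (fun _ : Fin 2 => ℤ) 0))
    fun c hc => (hC₁ c hc).2
  refine ⟨![σ₀, σ₁], e₁ + e₂, C₂.filter (· ≠ 0), ?_, he₁.add he₂, fun c hc => ?_⟩
  · have hfilter : (C₂.filter (· = 0)).sum = 0 :=
      Multiset.sum_eq_zero fun c hc => (Multiset.mem_filter.1 hc).2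
    have hsplit := congrArg Multiset.sum (Multiset.filter_add_not (· = 0) C₂)
    rw [Multiset.sum_add, hfilter, zero_add] at hsplit
    rw [hsum₁, hsum₂, hsplit, add_assoc]
  · obtain ⟨hc, hne⟩ := Multiset.mem_filter.1 hc
    refine ⟨fun i => ?_, hne, (hC₂ c hc).1.mono (by rw [generatorCount]; exact le_of_eq (by ring))⟩
    fin_cases i
    exacts [hsign₀ c hc, (hC₂ c hc).2]

theorem exists_orthant_loops_of_generators (hX : ∀ c ∈ X, vnorm c ≤ M) (ht : vnorm t ≤ M)
    {σ : Fin 2 → ℤˣ} (hC0 : C ≠ 0)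
    (hC : ∀ c ∈ C, c ∈ orthant σ ∧ c ≠ 0 ∧ IsSumOfAtMost X (generatorCount M) c) :
    ∃ e b₁ b₂, ∃ n₁ n₂ : ℕ,
      IsSumOfAtMost X ((2 * generatorNorm M + 1) ^ 2 *
        (2 * generatorNorm M ^ 2 * (loopMultiple M * loopMultiple M)) * generatorCount M) e ∧
      C.sum = e + n₁ • b₁ + n₂ • b₂ ∧ b₁ ∈ orthant σ ∧ b₂ ∈ orthant σ ∧
      Loopable X t (loopBound M) b₁ ∧ Loopable X t (loopBound M) b₂ := by
  have hnorm : ∀ c ∈ C, vnorm c ≤ generatorNorm M := fun c hc =>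
    ((hC c hc).2.2.vnorm_le hX).trans_eq (by rw [generatorCount, generatorNorm]; ring)
  obtain ⟨d₁, hd₁, d₂, hd₂, D, hD, hDle, hgen⟩ := exists_generators hC0
    fun c hc => ⟨(hC c hc).1, (hC c hc).2.1, hnorm c hc⟩
  obtain ⟨ho₁, h0₁, hs₁⟩ := hC d₁ hd₁
  obtain ⟨ho₂, h0₂, hs₂⟩ := hC d₂ hd₂
  obtain ⟨l₁, hl₁, hle₁, hloop₁⟩ := exists_nsmul_loopable hX ht h0₁ (hnorm d₁ hd₁) hs₁
  obtain ⟨l₂, hl₂, hle₂, hloop₂⟩ := exists_nsmul_loopable hX ht h0₂ (hnorm d₂ hd₂) hs₂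
  have hmultiple : ∀ c ∈ C, (D * (l₁ * l₂)) • c ∈ AddSubmonoid.closure {l₁ • d₁, l₂ • d₂} := by
    intro c hc
    obtain ⟨y₁, y₂, hy⟩ := (AddSubmonoid.mem_closure_pair ..).1 (hgen c hc)
    refine (AddSubmonoid.mem_closure_pair ..).2 ⟨y₁ * l₂, y₂ * l₁, ?_⟩
    rw [mul_comm D, mul_smul (l₁ * l₂) D, ← hy, smul_add, smul_smul, smul_smul, smul_smul,
      smul_smul]
    congr 2 <;> ring
  obtain ⟨e, n₁, n₂, he, hsum⟩ := exists_residue_add_nsmul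
    (Nat.mul_pos hD (Nat.mul_pos hl₁ hl₂)).ne' hnorm (fun c hc => (hC c hc).2.2) hmultiple
  refine ⟨e, l₁ • d₁, l₂ • d₂, n₁, n₂, he.mono ?_, hsum, nsmul_mem ho₁ l₁, nsmul_mem ho₂ l₂,
    hloop₁, hloop₂⟩
  gcongr
  exacts [hle₁, hle₂]

theorem exists_orthant_loops (hM : 1 ≤ M) (hX0 : X.Nonempty) (hX : ∀ c ∈ X, vnorm c ≤ M)
    (ht : vnorm t ≤ M) (hC : ∀ c ∈ C, c ∈ X) :
    ∃ σ e b₁ b₂, ∃ n₁ n₂ : ℕ, IsSumOfAtMost X (residueBound M) e ∧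
      C.sum = e + n₁ • b₁ + n₂ • b₂ ∧ b₁ ∈ orthant σ ∧ b₂ ∈ orthant σ ∧
      Loopable X t (loopBound M) b₁ ∧ Loopable X t (loopBound M) b₂ := by
  obtain ⟨σ, e, C', hsum, he, hC'⟩ := exists_orthant_normalization hM hX hC
  by_cases hC0 : C' = 0
  · refine ⟨σ, e, 0, 0, 0, 0, he.mono le_self_add, ?_, zero_mem _, zero_mem _, .zero hX0, .zero hX0⟩
    rw [hsum, hC0]
    simp
  · obtain ⟨e', b₁, b₂, n₁, n₂, he', hsum', hrest⟩ :=
      exists_orthant_loops_of_generators hX ht hC0 hC'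
    exact ⟨σ, e + e', b₁, b₂, n₁, n₂, he.add he', by rw [hsum, hsum']; abel, hrest⟩

end OrthantLoops

/-! ### Walks with two loops -/

namespace Walk

section Monoid

variable {V G : Type*} [DecidableEq V] [AddCommMonoid G] {E : V → G → V → Prop} {p q : V}
  {n k N : ℕ} {g v : G} {S S₀ : Finset V}

theorem iterate (h : Walk E p p n g S) {x : ℕ} (hx : 1 ≤ x) : Walk E p p (x * n) (x • g) S := by
  induction x, hx using Nat.le_induction with
  | base => exact h.copy (one_mul n).symm (one_nsmul g).symm rfl
  | succ x _ ih =>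
    exact (ih.trans h).copy (by ring) (succ_nsmul g x).symm (Finset.union_self S)

theorem insert_shortCycles (h : Walk E p q n g S) (hS : S₀ ⊆ S)
    (hv : IsSumOfAtMost (shortCycles E N S₀) k v) :
    ∃ n' S', n' ≤ n + k * N ∧ Walk E p q n' (g + v) S' ∧ S ⊆ S' := by
  obtain ⟨C, hC, hk, rfl⟩ := hv
  suffices ∃ n' S', n' ≤ n + C.card * N ∧ Walk E p q n' (g + C.sum) S' ∧ S ⊆ S' by
    obtain ⟨n', S', hn', hw⟩ := this
    exact ⟨n', S', hn'.trans (by gcongr), hw⟩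
  clear hk
  induction C using Multiset.induction with
  | empty => exact ⟨n, S, by simp, by simpa using h, subset_rfl⟩
  | cons a s ih =>
    obtain ⟨n', S', hn', hw, hSS'⟩ := ih fun c hc => hC c (Multiset.mem_cons_of_mem hc)
    obtain ⟨r, hr, l, S'', hl, w⟩ := hC a (Multiset.mem_cons_self a s)
    refine ⟨n' + l, S' ∪ S'', ?_, (hw.insert_cycle (hSS' (hS hr)) w).copy rfl ?_ rfl,
      hSS'.trans Finset.subset_union_left⟩
    · rw [Multiset.card_cons, add_mul]
      omega
    · rw [Multiset.sum_cons]
      abel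

end Monoid

theorem vnorm_le {V : Type*} [DecidableEq V] {d m n : ℕ} {E : V → Vec d → V → Prop} {p q : V}
    {g : Vec d} {S : Finset V} (h : Walk E p q n g S) (hE : ∀ p g q, E p g q → vnorm g ≤ m) :
    vnorm g ≤ n * m := by
  induction h with
  | nil => simp [vnorm_zero]
  | cons e _ ih =>
    rw [add_mul, one_mul, add_comm _ m]
    exact (vnorm_add_le _ _).trans (add_le_add (hE _ _ _ e) ih)

end Walk

/-- There is a walk from `p` to `q` of weight `s` that iterates two loops with weights in a common
orthant; its three segments and the two loops have total length at most `P`. -/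
inductive TwoLoopWalk {V : Type*} [DecidableEq V] {d : ℕ} (E : V → Vec d → V → Prop) (p q : V)
    (s : Vec d) (P : ℕ) : Prop
  | intro {σ : Fin d → ℤˣ} {r₁ r₂ : V} {n₀ n₁ n₂ l₁ l₂ : ℕ} {g₀ g₁ g₂ b₁ b₂ : Vec d}
      {S₀ S₁ S₂ R₁ R₂ : Finset V} (k₁ k₂ : ℕ)
      (segment₀ : Walk E p r₁ n₀ g₀ S₀) (loop₁ : Walk E r₁ r₁ l₁ b₁ R₁)
      (segment₁ : Walk E r₁ r₂ n₁ g₁ S₁) (loop₂ : Walk E r₂ r₂ l₂ b₂ R₂)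
      (segment₂ : Walk E r₂ q n₂ g₂ S₂)
      (sum_eq : s = g₀ + k₁ • b₁ + g₁ + k₂ • b₂ + g₂)
      (mem₁ : b₁ ∈ orthant σ) (mem₂ : b₂ ∈ orthant σ)
      (length_le : n₀ + n₁ + n₂ + l₁ + l₂ ≤ P) : TwoLoopWalk E p q s P

theorem TwoLoopWalk.mono {V : Type*} [DecidableEq V] {d : ℕ} {E : V → Vec d → V → Prop} {p q : V}
    {s : Vec d} {P P' : ℕ} (h : TwoLoopWalk E p q s P) (hP : P ≤ P') : TwoLoopWalk E p q s P' := by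
  obtain ⟨k₁, k₂, w₀, c₁, w₁, c₂, w₂, hs, h₁, h₂, hlen⟩ := h
  exact ⟨k₁, k₂, w₀, c₁, w₁, c₂, w₂, hs, h₁, h₂, hlen.trans hP⟩

/-- Bounds the length of each of the two loops. -/
def loopLength (x : ℕ) : ℕ := loopBound (x ^ 3) * (x ^ 2 + x)

/-- Bounds the total length of the segments and loops of the two-loop walks. -/
def segmentBound (x : ℕ) : ℕ := x ^ 2 + residueBound (x ^ 3) * x + 2 * loopLength x

@[fun_prop]
theorem polyBounded_segmentBound : PolyBounded segmentBound := by
  unfold segmentBound loopLength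
  fun_prop

section TwoLoopWalk

variable {V : Type*} [DecidableEq V] {p q : V} {n x : ℕ} {S : Finset V}

theorem Walk.twoLoopWalk {d : ℕ} {E : V → Vec d → V → Prop} {σ : Fin d → ℤˣ} {r₁ r₂ : V}
    {l₁ l₂ : ℕ} {g b₁ b₂ : Vec d} {R₁ R₂ : Finset V} (h : Walk E p q n g S) (hr₁ : r₁ ∈ S)
    (hr₂ : r₂ ∈ S) (loop₁ : Walk E r₁ r₁ l₁ b₁ R₁) (loop₂ : Walk E r₂ r₂ l₂ b₂ R₂)
    (hb₁ : b₁ ∈ orthant σ) (hb₂ : b₂ ∈ orthant σ) (k₁ k₂ : ℕ) :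
    TwoLoopWalk E p q (g + k₁ • b₁ + k₂ • b₂) (n + l₁ + l₂) := by
  obtain ⟨n₁, n₂, g₁, g₂, S₁, S₂, w₁, w₂, rfl, rfl, rfl⟩ := h.split hr₁
  rcases Finset.mem_union.1 hr₂ with hr | hr
  · obtain ⟨n₃, n₄, g₃, g₄, S₃, S₄, w₃, w₄, rfl, rfl, -⟩ := w₁.split hr
    exact .intro k₂ k₁ w₃ loop₂ w₄ loop₁ w₂ (by abel) hb₂ hb₁ (by omega)
  · obtain ⟨n₃, n₄, g₃, g₄, S₃, S₄, w₃, w₄, rfl, rfl, -⟩ := w₂.split hr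
    exact .intro k₁ k₂ w₁ loop₁ w₃ loop₂ w₄ (by abel) hb₁ hb₂ (by omega)

variable {E : V → Vec 2 → V → Prop} {g b : Vec 2}

theorem cross_eq_zero_of_apply_eq_zero {a b : Vec 2} {i : Fin 2} (ha : a i = 0) (hb : b i = 0) :
    cross a b = 0 := by
  rw [cross_apply]
  fin_cases i <;> simp_all

theorem Walk.exists_loop (h : Walk E p q n g S) (hn : n ≤ x ^ 2) (hS : S.card ≤ x)
    (hpq : p = q ∨ ∃ i, ∀ r l c R, Walk E r r l c R → c i = 0)
    (hb : Loopable (shortCycles E S.card S) g (loopBound (x ^ 3)) b) :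
    ∃ r ∈ S, ∃ l ≤ loopLength x, ∃ R, Walk E r r l b R := by
  rw [loopLength, mul_add]
  rcases hb with ⟨c, ⟨r, hr, l, R, hl, w⟩, a, ha, rfl⟩ |
    ⟨⟨c, ⟨r, -, l, R, -, w⟩, c', ⟨r', -, l', R', -, w'⟩, hcc'⟩, a, v, ha₁, ha, hv, rfl⟩
  · rcases Nat.eq_zero_or_pos a with rfl | hpos
    · exact ⟨r, hr, 0, Nat.zero_le _, {r}, (nil r).copy rfl (zero_nsmul c).symm rfl⟩
    · have hlen := Nat.mul_le_mul ha (hl.trans hS)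
      exact ⟨r, hr, a * l, by omega, R, w.iterate hpos⟩
  · rcases hpq with rfl | ⟨i, hi⟩
    · obtain ⟨n', S', hn', hw, -⟩ := (h.iterate ha₁).insert_shortCycles subset_rfl hv
      have hlen := Nat.mul_le_mul ha hn
      have hcyc := Nat.mul_le_mul_left (loopBound (x ^ 3)) hS
      exact ⟨p, h.head_mem, n', by omega, S', hw⟩
    · exact absurd (cross_eq_zero_of_apply_eq_zero (hi r l c R w) (hi r' l' c' R' w')) hcc'

theorem Walk.exists_twoLoopWalk (h : Walk E p q n g S) (hS : S.card ≤ x)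
    (hE : ∀ p g q, E p g q → vnorm g ≤ x)
    (hpq : p = q ∨ ∃ i, ∀ r l c R, Walk E r r l c R → c i = 0) :
    TwoLoopWalk E p q g (segmentBound x) := by
  have hx : 1 ≤ x := (Finset.card_pos.2 ⟨p, h.head_mem⟩).trans_le hS
  obtain ⟨n₀, g₀, C, w₀, hn₀, hC, rfl⟩ := h.exists_skeleton
  replace hn₀ : n₀ ≤ x ^ 2 := hn₀.trans ((Nat.mul_le_mul hS hS).trans_eq (sq x).symm)
  have hne : (shortCycles E S.card S).Nonempty :=
    ⟨0, p, h.head_mem, 0, {p}, Nat.zero_le _, nil p⟩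
  have hcycle : ∀ c ∈ shortCycles E S.card S, vnorm c ≤ x ^ 3 := by
    rintro c ⟨r, -, l, R, hl, w⟩
    calc vnorm c ≤ l * x := w.vnorm_le hE
      _ ≤ x * x := Nat.mul_le_mul_right x (hl.trans hS)
      _ = x ^ 2 := (sq x).symm
      _ ≤ x ^ 3 := Nat.pow_le_pow_right hx (by omega)
  have hskeleton : vnorm g₀ ≤ x ^ 3 :=
    (w₀.vnorm_le hE).trans ((Nat.mul_le_mul_right x hn₀).trans_eq (pow_succ x 2).symm)
  obtain ⟨σ, e, b₁, b₂, k₁, k₂, he, hsum, hb₁, hb₂, hloop₁, hloop₂⟩ :=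
    exists_orthant_loops (Nat.pow_pos hx) hne hcycle hskeleton hC
  obtain ⟨r₁, hr₁, l₁, hl₁, R₁, w₁⟩ := w₀.exists_loop hn₀ hS hpq hloop₁
  obtain ⟨r₂, hr₂, l₂, hl₂, R₂, w₂⟩ := w₀.exists_loop hn₀ hS hpq hloop₂
  obtain ⟨n', S', hn', w', hSS'⟩ := w₀.insert_shortCycles subset_rfl he
  have hwalk := w'.twoLoopWalk (hSS' hr₁) (hSS' hr₂) w₁ w₂ hb₁ hb₂ k₁ k₂
  have hlen : n' + l₁ + l₂ ≤ segmentBound x := by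
    have := Nat.mul_le_mul_left (residueBound (x ^ 3)) hS
    rw [segmentBound]
    omega
  convert hwalk.mono hlen using 1
  rw [hsum]
  abel

end TwoLoopWalk

/-! ### Runs and linear path schemes -/

/-- A configuration `p(u)` of a `d`-VASS. -/
abbrev Config (d : ℕ) := ℕ × Vec d

section Runs

variable {d : ℕ} {T : Finset (Trans d)} {A : Set (Vec d)} {p q r : ℕ} {u v w : Vec d}
  {π π' : List (Trans d)}

theorem disp_cons (t : Trans d) (π : List (Trans d)) : disp (t :: π) = t.2.1 + disp π :=
  List.sum_cons

theorem IsPathFrom.append (h : IsPathFrom p q π) (h' : IsPathFrom q r π') :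
    IsPathFrom p r (π ++ π') := by
  induction π generalizing p with
  | nil => exact Eq.symm h ▸ h'
  | cons t π ih => exact ⟨h.1, ih h.2⟩

theorem run_nil_iff : Run T A p u q v [] ↔ p = q ∧ u ∈ A ∧ v = u := by
  constructor
  · rintro ⟨-, rfl, hu, rfl, -⟩
    exact ⟨rfl, hu, add_zero u⟩
  · rintro ⟨rfl, hu, rfl⟩
    refine ⟨by simp, rfl, hu, (add_zero v).symm, fun i hi hi' => ?_⟩
    exact absurd (hi.trans hi') (by simp)

theorem run_cons_iff {t : Trans d} :
    Run T A p u q v (t :: π) ↔ t ∈ T ∧ t.1 = p ∧ u ∈ A ∧ Run T A t.2.2 (u + t.2.1) q v π := by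
  have htake : ∀ i, u + disp ((t :: π).take (i + 1)) = u + t.2.1 + disp (π.take i) := fun i => by
    rw [List.take_succ_cons, disp_cons, add_assoc]
  constructor
  · rintro ⟨hT, ⟨ht, hpath⟩, hu, hv, hA⟩
    refine ⟨hT t List.mem_cons_self, ht, hu, fun s hs => hT s (List.mem_cons_of_mem t hs), hpath,
      ?_, by rw [hv, disp_cons, add_assoc], fun i _ hi => ?_⟩
    · simpa [disp] using hA 1 le_rfl (Nat.le_add_left 1 _)
    · exact htake i ▸ hA (i + 1) (Nat.le_add_left 1 i) (Nat.succ_le_succ hi)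
  · rintro ⟨htT, ht, hu, hT, hpath, hut, hv, hA⟩
    refine ⟨List.forall_mem_cons.2 ⟨htT, hT⟩, ⟨ht, hpath⟩, hu,
      by rw [hv, disp_cons, add_assoc], fun i hi hi' => ?_⟩
    obtain ⟨j, rfl⟩ := Nat.exists_eq_add_of_le' hi
    rw [htake]
    rcases Nat.eq_zero_or_pos j with rfl | hj
    · simpa [disp] using hut
    · exact hA j hj (Nat.le_of_succ_le_succ hi')

theorem Run.append (h : Run T A p u q v π) (h' : Run T A q v r w π') :
    Run T A p u r w (π ++ π') := by
  induction π generalizing p u with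
  | nil =>
    obtain ⟨rfl, -, rfl⟩ := run_nil_iff.1 h
    exact h'
  | cons t π ih =>
    obtain ⟨htT, ht, hu, hrun⟩ := run_cons_iff.1 h
    exact run_cons_iff.2 ⟨htT, ht, hu, ih hrun⟩

end Runs

/-- `SchemeReach T A k n c c'`: some linear path scheme with at most `k` cycles and of length at
most `n` contains a run from `c` to `c'` inside `A`. The scheme is built from its front, one
transition or one starred cycle at a time. -/
inductive SchemeReach {d : ℕ} (T : Finset (Trans d)) (A : Set (Vec d)) :
    ℕ → ℕ → Config d → Config d → Prop
  | nil {k n : ℕ} {c : Config d} : c.2 ∈ A → SchemeReach T A k n c c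
  | step {p q k n : ℕ} {z u : Vec d} {c : Config d} : (p, z, q) ∈ T → u ∈ A →
      SchemeReach T A k n (q, u + z) c → SchemeReach T A k (n + 1) (p, u) c
  | star {p k n : ℕ} {u v : Vec d} {c : Config d} (β : List (Trans d)) (j : ℕ) : β ≠ [] →
      (∀ t ∈ β, t ∈ T) → IsPathFrom p p β → Run T A p u p v (List.replicate j β).flatten →
      SchemeReach T A k n (p, v) c → SchemeReach T A (k + 1) (n + β.length) (p, u) c

namespace SchemeReach

variable {d : ℕ} {T : Finset (Trans d)} {A : Set (Vec d)} {k k' n n' : ℕ} {c c' c'' : Config d}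

theorem mono (h : SchemeReach T A k n c c') (hk : k ≤ k') (hn : n ≤ n') :
    SchemeReach T A k' n' c c' := by
  induction h generalizing k' n' with
  | nil hc => exact nil hc
  | step ht hu _ ih =>
    obtain ⟨n', rfl⟩ := Nat.exists_eq_add_of_le' (Nat.le_of_add_left_le hn)
    exact step ht hu (ih hk (Nat.le_of_succ_le_succ hn))
  | star β j hβ hT hpath hrun _ ih =>
    obtain ⟨k', rfl⟩ := Nat.exists_eq_add_of_le' (Nat.le_of_add_left_le hk)
    obtain ⟨n', rfl⟩ := Nat.exists_eq_add_of_le' (Nat.le_of_add_left_le hn)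
    exact star β j hβ hT hpath hrun (ih (Nat.le_of_succ_le_succ hk) (Nat.le_of_add_le_add_right hn))

theorem trans (h : SchemeReach T A k n c c') (h' : SchemeReach T A k' n' c' c'') :
    SchemeReach T A (k + k') (n + n') c c'' := by
  induction h with
  | nil _ => exact h'.mono (Nat.le_add_left _ _) (Nat.le_add_left _ _)
  | step ht hu _ ih =>
    rw [add_right_comm]
    exact step ht hu (ih h')
  | star β j hβ hT hpath hrun _ ih =>
    rw [add_right_comm, add_right_comm _ β.length]
    exact star β j hβ hT hpath hrun (ih h')

theorem of_run {p q : ℕ} {u v : Vec d} {π : List (Trans d)} (h : Run T A p u q v π) :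
    SchemeReach T A 0 π.length (p, u) (q, v) := by
  induction π generalizing p u with
  | nil =>
    obtain ⟨rfl, hu, rfl⟩ := run_nil_iff.1 h
    exact nil hu
  | cons t π ih =>
    obtain ⟨htT, rfl, hu, hrun⟩ := run_cons_iff.1 h
    exact step htT hu (ih hrun)

theorem exists_lps (h : SchemeReach T A k n c c') : ∃ (ρ : LPS d) (π : List (Trans d)),
    IsLPSFrom T c.1 c'.1 ρ ∧ lpsLen ρ ≤ n ∧ numCycles ρ ≤ k ∧ InLang ρ π ∧
      Run T A c.1 c.2 c'.1 c'.2 π := by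
  induction h with
  | nil hc =>
    exact ⟨([], []), [], ⟨by simp [lpsSupport], rfl, by simp⟩, Nat.zero_le _, Nat.zero_le _,
      ⟨[], rfl, rfl⟩, run_nil_iff.2 ⟨rfl, hc, rfl⟩⟩
  | @step p q k n z u c' ht hu _ ih =>
    obtain ⟨⟨α, l⟩, π, ⟨hT, hpath, hcycles⟩, hlen, hnum, ⟨e, he, rfl⟩, hrun⟩ := ih
    exact ⟨((p, z, q) :: α, l), _, ⟨List.forall_mem_cons.2 ⟨ht, hT⟩, ⟨rfl, hpath⟩, hcycles⟩,
      Nat.succ_le_succ hlen, hnum, ⟨e, he, rfl⟩, run_cons_iff.2 ⟨ht, rfl, hu, hrun⟩⟩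
  | @star p k n u v c' β j hβ hβT hβpath hβrun _ ih =>
    obtain ⟨⟨α, l⟩, π, ⟨hT, hpath, hcycles⟩, hlen, hnum, ⟨e, he, rfl⟩, hrun⟩ := ih
    have hsupport : lpsSupport (([], (β, α) :: l) : LPS d) = β ++ lpsSupport (α, l) := by
      simp [lpsSupport]
    have hword : lpsWord (([], (β, α) :: l) : LPS d) (j :: e)
        = (List.replicate j β).flatten ++ lpsWord (α, l) e := by simp [lpsWord]
    refine ⟨([], (β, α) :: l), _, ⟨?_, ?_, ?_⟩, ?_, Nat.succ_le_succ hnum,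
      ⟨j :: e, congrArg Nat.succ he, rfl⟩, ?_⟩
    · rw [hsupport]
      exact List.forall_mem_append.2 ⟨hβT, hT⟩
    · rw [hsupport]
      exact hβpath.append hpath
    · exact List.forall_mem_cons.2 ⟨⟨hβ, p, hβpath⟩, hcycles⟩
    · rw [lpsLen, hsupport, List.length_append, add_comm]
      exact Nat.add_le_add_right hlen _
    · rw [hword]
      exact hβrun.append hrun

end SchemeReach

/-! ### Lifting walks on bounded coordinates to runs -/

section Orthant

variable {d : ℕ} {σ : Fin d → ℤˣ} {b y : Vec d}

theorem apply_nonneg_or_nonpos (hb : b ∈ orthant σ) (hy : y ∈ orthant σ) (i : Fin d) :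
    0 ≤ b i ∧ 0 ≤ y i ∨ b i ≤ 0 ∧ y i ≤ 0 := by
  have hbi := hb i
  have hyi := hy i
  rcases Int.units_eq_one_or (σ i) with h | h <;> simp only [h, Units.val_one, Units.val_neg,
    one_mul, neg_mul, Left.nonneg_neg_iff] at hbi hyi <;> tauto

theorem le_vnorm_nsmul_add (hb : b ∈ orthant σ) (hy : y ∈ orthant σ) (hb0 : b ≠ 0) (k : ℕ) :
    k ≤ vnorm (k • b + y) := by
  obtain ⟨i, hi⟩ := Function.ne_iff.1 hb0
  refine Nat.cast_le.1 (le_trans ?_ (abs_apply_le_vnorm (k • b + y) i))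
  rw [Pi.add_apply, nsmul_vec_apply]
  rw [Pi.zero_apply] at hi
  rcases apply_nonneg_or_nonpos hb hy i with ⟨hbi, hyi⟩ | ⟨hbi, hyi⟩
  · have : 1 ≤ b i := by omega
    exact le_abs.2 (.inl (by nlinarith))
  · have : b i ≤ -1 := by omega
    exact le_abs.2 (.inr (by nlinarith))

end Orthant

section Projection

variable {d : ℕ}

theorem vnorm_le_tnorm {T : Finset (Trans d)} {t : Trans d} (ht : t ∈ T) :
    vnorm t.2.1 ≤ tnorm T :=
  Finset.le_sup (f := fun t : Trans d => vnorm t.2.1) ht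

/-- The configurations with state in `Q` and all coordinates in `[0, D)`. -/
noncomputable def box (d : ℕ) (Q : Finset ℕ) (D : ℕ) : Finset (Config d) :=
  Q ×ˢ Fintype.piFinset fun _ => Finset.Ico (0 : ℤ) D

theorem card_box (Q : Finset ℕ) (D : ℕ) : (box d Q D).card = Q.card * D ^ d := by
  simp [box]

theorem mem_box {Q : Finset ℕ} {D : ℕ} {c : Config d} :
    c ∈ box d Q D ↔ c.1 ∈ Q ∧ ∀ i, 0 ≤ c.2 i ∧ c.2 i < D := by
  simp only [box, Finset.mem_product, Fintype.mem_piFinset, Finset.mem_Ico]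

theorem mem_natSet_of_mem_box {Q : Finset ℕ} {D : ℕ} {c : Config d} (hc : c ∈ box d Q D) :
    c.2 ∈ NatSet d :=
  fun i => ((mem_box.1 hc).2 i).1

/-- A transition seen on the coordinates in `J` only, which stay in `[0, D)`. The walks of this
finite graph record the behaviour of runs whose other coordinates are large. -/
def ProjStep (T : Finset (Trans d)) (Q : Finset ℕ) (J : Finset (Fin d)) (D : ℕ) (c : Config d)
    (z : Vec d) (c' : Config d) : Prop :=
  (c.1, z, c'.1) ∈ T ∧ c' ∈ box d Q D ∧ ∀ j ∈ J, c'.2 j = c.2 j + z j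

/-- `u` agrees with `w` on the coordinates in `J` and is at least `r` on all others. -/
def Fits (J : Finset (Fin d)) (w : Vec d) (r : ℕ) (u : Vec d) : Prop :=
  (∀ j ∈ J, u j = w j) ∧ ∀ j ∉ J, (r : ℤ) ≤ u j

namespace Fits

variable {J : Finset (Fin d)} {w u g : Vec d} {r r' : ℕ}

theorem mono (h : Fits J w r u) (hr : r' ≤ r) : Fits J w r' u :=
  ⟨h.1, fun j hj => (Nat.cast_le.2 hr).trans (h.2 j hj)⟩

theorem mem_natSet (h : Fits J w r u) (hw : w ∈ NatSet d) : u ∈ NatSet d := by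
  intro i
  by_cases hi : i ∈ J
  · exact h.1 i hi ▸ hw i
  · exact (Nat.cast_nonneg r).trans (h.2 i hi)

theorem add_of_add_succ_nsmul {k : ℕ} (h : Fits J w r u) (h' : Fits J w r (u + (k + 1) • g)) :
    Fits J w r (u + g) := by
  have happly : ∀ j, (u + (k + 1) • g) j = u j + (k + 1) * g j := fun j => by
    rw [Pi.add_apply, nsmul_vec_apply, Nat.cast_succ]
  refine ⟨fun j hj => ?_, fun j hj => ?_⟩
  · have hend := h'.1 j hj
    rw [happly, h.1 j hj, add_eq_left, mul_eq_zero] at hend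
    rw [Pi.add_apply, hend.resolve_left (by omega), add_zero, h.1 j hj]
  · have hstart := h.2 j hj
    have hend := h'.2 j hj
    rw [happly] at hend
    rw [Pi.add_apply]
    rcases le_total 0 (g j) with hg | hg <;> nlinarith

end Fits

theorem run_replicate {T : Finset (Trans d)} {J : Finset (Fin d)} {p r k : ℕ} {v u g : Vec d}
    {π : List (Trans d)} (hv : v ∈ NatSet d)
    (hrun : ∀ u, Fits J v r u → Run T (NatSet d) p u p (u + g) π)
    (hu : Fits J v r u) (hu' : Fits J v r (u + k • g)) :
    Run T (NatSet d) p u p (u + k • g) (List.replicate k π).flatten := by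
  induction k generalizing u with
  | zero => exact run_nil_iff.2 ⟨rfl, hu.mem_natSet hv, by rw [zero_nsmul, add_zero]⟩
  | succ k ih =>
    have hsplit : u + (k + 1) • g = u + g + k • g := by rw [succ_nsmul', add_assoc]
    rw [List.replicate_succ, List.flatten_cons]
    refine (hrun u hu).append ?_
    rw [hsplit] at hu' ⊢
    exact ih (hu.add_of_add_succ_nsmul (hsplit ▸ hu')) hu'

namespace Walk

variable {T : Finset (Trans d)} {Q : Finset ℕ} {J : Finset (Fin d)} {D n : ℕ} {c c' : Config d}
  {g : Vec d} {S : Finset (Config d)}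

theorem apply_eq_add (w : Walk (ProjStep T Q J D) c c' n g S) {j : Fin d} (hj : j ∈ J) :
    c'.2 j = c.2 j + g j := by
  induction w with
  | nil => rw [Pi.zero_apply, add_zero]
  | cons e _ ih => rw [ih, e.2.2 j hj, Pi.add_apply, add_assoc]

theorem apply_eq_zero (w : Walk (ProjStep T Q J D) c c n g S) {j : Fin d} (hj : j ∈ J) :
    g j = 0 :=
  left_eq_add.1 (w.apply_eq_add hj)

theorem target_mem_box (w : Walk (ProjStep T Q J D) c c' n g S) (hc : c ∈ box d Q D) :
    c' ∈ box d Q D := by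
  induction w with
  | nil => exact hc
  | cons e _ ih => exact ih e.2.1

theorem exists_path (w : Walk (ProjStep T Q J D) c c' n g S) (hc : c ∈ box d Q D) :
    ∃ π : List (Trans d), π.length = n ∧ (∀ t ∈ π, t ∈ T) ∧ IsPathFrom c.1 c'.1 π ∧
      ∀ u, Fits J c.2 (n * tnorm T) u → Run T (NatSet d) c.1 u c'.1 (u + g) π := by
  induction w with
  | nil c =>
    exact ⟨[], rfl, by simp, rfl, fun u hu =>
      run_nil_iff.2 ⟨rfl, hu.mem_natSet (mem_natSet_of_mem_box hc), add_zero u⟩⟩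
  | @cons c r c' n z g _ e _ ih =>
    obtain ⟨π, hlen, hT, hpath, hrun⟩ := ih e.2.1
    refine ⟨(c.1, z, r.1) :: π, congrArg Nat.succ hlen, List.forall_mem_cons.2 ⟨e.1, hT⟩,
      ⟨rfl, hpath⟩, fun u hu =>
        run_cons_iff.2 ⟨e.1, rfl, hu.mem_natSet (mem_natSet_of_mem_box hc), ?_⟩⟩
    rw [← add_assoc]
    refine hrun (u + z) ⟨fun j hj => ?_, fun j hj => ?_⟩
    · rw [Pi.add_apply, hu.1 j hj, e.2.2 j hj]
    · have hz : |z j| ≤ (tnorm T : ℤ) := vnorm_le_iff.1 (vnorm_le_tnorm e.1) j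
      have huj := hu.2 j hj
      rw [Pi.add_apply]
      push_cast at huj ⊢
      linarith [(abs_le.1 hz).1]

theorem schemeReach (w : Walk (ProjStep T Q J D) c c' n g S) (hc : c ∈ box d Q D) {u : Vec d}
    (hu : Fits J c.2 (n * tnorm T) u) :
    SchemeReach T (NatSet d) 0 n (c.1, u) (c'.1, u + g) := by
  obtain ⟨π, rfl, -, -, hrun⟩ := w.exists_path hc
  exact .of_run (hrun u hu)

theorem schemeReach_iterate (w : Walk (ProjStep T Q J D) c c n g S) (hc : c ∈ box d Q D) {k N : ℕ}
    {u : Vec d} (hu : Fits J c.2 (n * tnorm T) u) (hu' : Fits J c.2 (n * tnorm T) (u + k • g))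
    (hN : g ≠ 0 → k ≤ N) :
    SchemeReach T (NatSet d) 1 n (c.1, u) (c.1, u + k • g) ∧
      SchemeReach T (NatSet d) 0 (N * n) (c.1, u) (c.1, u + k • g) := by
  have hnat := mem_natSet_of_mem_box hc
  rcases eq_or_ne g 0 with rfl | hg
  · rw [smul_zero, add_zero]
    exact ⟨.nil (hu.mem_natSet hnat), .nil (hu.mem_natSet hnat)⟩
  obtain ⟨π, rfl, hT, hpath, hrun⟩ := w.exists_path hc
  have hπ : π ≠ [] := by
    rintro rfl
    cases w
    exact hg rfl
  have hiter := run_replicate hnat hrun hu hu'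
  constructor
  · exact (SchemeReach.star (k := 0) (n := 0) π k hπ hT hpath hiter
      (.nil (hu'.mem_natSet hnat))).mono le_rfl (by rw [zero_add])
  · refine (SchemeReach.of_run hiter).mono le_rfl ?_
    simpa using Nat.mul_le_mul_right π.length (hN hg)

end Walk

variable {T : Finset (Trans d)} {Q : Finset ℕ} {J : Finset (Fin d)} {σ : Fin d → ℤˣ} {D R : ℕ}
  {c : Config d} {u s : Vec d}

/-- While the loops run, the coordinates move monotonically, so a coordinate that is large at both
ends of the run is large at every breakpoint. -/
theorem Fits.breakpoint {w w' v : Vec d} (hu : Fits J w (2 * R) u)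
    (hend : ∀ j ∉ J, ((2 * R : ℕ) : ℤ) ≤ (u + s) j) (g g' y y' : Vec d) (hv : v = u + g + y)
    (hs : u + s = v + g' + y') (hg : vnorm g ≤ R) (hg' : vnorm g' ≤ R) (hy : y ∈ orthant σ)
    (hy' : y' ∈ orthant σ) (hw : ∀ j ∈ J, w' j = w j + (g + y) j) : Fits J w' R v := by
  refine ⟨fun j hj => by rw [hv, add_assoc, Pi.add_apply, hu.1 j hj, hw j hj], fun j hj => ?_⟩
  have hgj := abs_le.1 (vnorm_le_iff.1 hg j)
  have hgj' := abs_le.1 (vnorm_le_iff.1 hg' j)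
  have hstart := hu.2 j hj
  have hendj := hend j hj
  rw [hs] at hendj
  simp only [hv, Pi.add_apply] at hendj ⊢
  rcases apply_nonneg_or_nonpos hy hy' j with ⟨_, _⟩ | ⟨_, _⟩ <;> omega

theorem Fits.breakpoints {r₁ r₂ : Config d} {n₀ n₁ l₁ l₂ k₁ k₂ : ℕ} {g₀ g₁ g₂ b₁ b₂ : Vec d}
    {S₀ S₁ R₁ R₂ : Finset (Config d)} (hu : Fits J c.2 (2 * R) u)
    (hend : ∀ j ∉ J, ((2 * R : ℕ) : ℤ) ≤ (u + s) j)
    (segment₀ : Walk (ProjStep T Q J D) c r₁ n₀ g₀ S₀)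
    (loop₁ : Walk (ProjStep T Q J D) r₁ r₁ l₁ b₁ R₁)
    (segment₁ : Walk (ProjStep T Q J D) r₁ r₂ n₁ g₁ S₁)
    (loop₂ : Walk (ProjStep T Q J D) r₂ r₂ l₂ b₂ R₂)
    (hs : s = g₀ + k₁ • b₁ + g₁ + k₂ • b₂ + g₂) (hg : vnorm g₀ + vnorm g₁ + vnorm g₂ ≤ R)
    (hb₁ : k₁ • b₁ ∈ orthant σ) (hb₂ : k₂ • b₂ ∈ orthant σ) :
    Fits J r₁.2 R (u + g₀) ∧ Fits J r₁.2 R (u + g₀ + k₁ • b₁) ∧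
      Fits J r₂.2 R (u + g₀ + k₁ • b₁ + g₁) ∧
      Fits J r₂.2 R (u + g₀ + k₁ • b₁ + g₁ + k₂ • b₂) := by
  have hg₀₁ : vnorm (g₀ + g₁) ≤ vnorm g₀ + vnorm g₁ := vnorm_add_le g₀ g₁
  have hg₁₂ : vnorm (g₁ + g₂) ≤ vnorm g₁ + vnorm g₂ := vnorm_add_le g₁ g₂
  have hJ₀ := fun j (hj : j ∈ J) => segment₀.apply_eq_add hj
  have hJ₁ := fun j (hj : j ∈ J) => segment₁.apply_eq_add hj
  have hloop₁ := fun j (hj : j ∈ J) => loop₁.apply_eq_zero hj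
  have hloop₂ := fun j (hj : j ∈ J) => loop₂.apply_eq_zero hj
  subst hs
  refine ⟨hu.breakpoint hend g₀ (g₁ + g₂) 0 (k₁ • b₁ + k₂ • b₂) (by abel) (by abel) (by omega)
      (by omega) (zero_mem _) (add_mem hb₁ hb₂) ?_,
    hu.breakpoint hend g₀ (g₁ + g₂) (k₁ • b₁) (k₂ • b₂) (by abel) (by abel) (by omega)
      (by omega) hb₁ hb₂ ?_,
    hu.breakpoint hend (g₀ + g₁) g₂ (k₁ • b₁) (k₂ • b₂) (by abel) (by abel) (by omega)
      (by omega) hb₁ hb₂ ?_,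
    hu.breakpoint hend (g₀ + g₁) g₂ (k₁ • b₁ + k₂ • b₂) 0 (by abel) (by abel) (by omega)
      (by omega) (add_mem hb₁ hb₂) (zero_mem _) ?_⟩ <;>
  simp +contextual [hJ₀, hJ₁, hloop₁, hloop₂, add_assoc]

theorem TwoLoopWalk.schemeReach {c' : Config d} {P : ℕ}
    (h : TwoLoopWalk (ProjStep T Q J D) c c' s P) (hc : c ∈ box d Q D)
    (hu : Fits J c.2 (2 * (P * tnorm T)) u)
    (hend : ∀ j ∉ J, ((2 * (P * tnorm T) : ℕ) : ℤ) ≤ (u + s) j) :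
    SchemeReach T (NatSet d) 2 P (c.1, u) (c'.1, u + s) ∧
      SchemeReach T (NatSet d) 0 (P + (vnorm s + P * tnorm T) * P) (c.1, u) (c'.1, u + s) := by
  obtain @⟨σ, r₁, r₂, n₀, n₁, n₂, l₁, l₂, g₀, g₁, g₂, b₁, b₂, _, _, _, _, _, k₁, k₂, w₀, loop₁, w₁,
    loop₂, w₂, hs, hb₁, hb₂, hP⟩ := h
  have hnorm {c c' n g S} (w : Walk (ProjStep T Q J D) c c' n g S) : vnorm g ≤ n * tnorm T :=
    w.vnorm_le fun _ _ _ e => vnorm_le_tnorm e.1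
  have hPm := Nat.mul_le_mul_right (tnorm T) hP
  simp only [add_mul] at hPm
  have hg : vnorm g₀ + vnorm g₁ + vnorm g₂ ≤ P * tnorm T := by
    have := add_le_add (add_le_add (hnorm w₀) (hnorm w₁)) (hnorm w₂)
    omega
  have hy₁ : k₁ • b₁ ∈ orthant σ := nsmul_mem hb₁ k₁
  have hy₂ : k₂ • b₂ ∈ orthant σ := nsmul_mem hb₂ k₂
  have hr₁ := w₀.target_mem_box hc
  have hr₂ := w₁.target_mem_box hr₁
  have hloops : vnorm (k₁ • b₁ + k₂ • b₂) ≤ vnorm s + P * tnorm T := by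
    have : k₁ • b₁ + k₂ • b₂ = s - (g₀ + g₁ + g₂) := by rw [hs]; abel
    rw [this]
    refine (vnorm_sub_le _ _).trans (Nat.add_le_add_left (le_trans ?_ hg) _)
    exact (vnorm_add_le _ _).trans (Nat.add_le_add_right (vnorm_add_le _ _) _)
  obtain ⟨hu₁, hu₂, hu₃, hu₄⟩ := hu.breakpoints hend w₀ loop₁ w₁ loop₂ hs hg hy₁ hy₂
  have s₀ := w₀.schemeReach hc (hu.mono (by omega))
  have s₁ := loop₁.schemeReach_iterate hr₁ (hu₁.mono (by omega)) (hu₂.mono (by omega))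
    fun hb => (le_vnorm_nsmul_add hb₁ hy₂ hb k₁).trans hloops
  have s₂ := w₁.schemeReach hr₁ (hu₂.mono (by omega))
  have s₃ := loop₂.schemeReach_iterate hr₂ (hu₃.mono (by omega)) (hu₄.mono (by omega))
    fun hb => (le_vnorm_nsmul_add hb₂ hy₁ hb k₂).trans (add_comm (k₁ • b₁) _ ▸ hloops)
  have s₄ := w₂.schemeReach hr₂ (hu₄.mono (by omega))
  have hsum : u + s = u + g₀ + k₁ • b₁ + g₁ + k₂ • b₂ + g₂ := by rw [hs]; simp only [add_assoc]
  rw [hsum]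
  constructor
  · exact ((((s₀.trans s₁.1).trans s₂).trans s₃.1).trans s₄).mono le_rfl (by omega)
  · refine ((((s₀.trans s₁.2).trans s₂).trans s₃.2).trans s₄).mono le_rfl ?_
    have := Nat.mul_le_mul_left (vnorm s + P * tnorm T) (show l₁ + l₂ ≤ P by omega)
    rw [mul_add] at this
    omega

end Projection

/-! ### Chains inside a region -/

/-- `ChainIn r A a b`: a chain of `r`-steps leads from `a` to `b`, and all its elements, including
the ends, lie in `A`. -/
inductive ChainIn {α : Type*} (r : α → α → Prop) (A : Set α) (a : α) : α → Prop
  | refl : a ∈ A → ChainIn r A a a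
  | tail {b e : α} : ChainIn r A a b → r b e → e ∈ A → ChainIn r A a e

/-- Two consecutive visits to `B` of a chain inside `A`. -/
def ReturnStep {α : Type*} (r : α → α → Prop) (A B : Set α) (a b : α) : Prop :=
  a ∈ B ∧ b ∈ B ∧ (r a b ∨ ∃ a' b', r a a' ∧ ChainIn r (A \ B) a' b' ∧ r b' b)

namespace ChainIn

variable {α : Type*} {r : α → α → Prop} {A A' B : Set α} {a b : α}

theorem mono (h : ChainIn r A a b) (hA : A ⊆ A') : ChainIn r A' a b := by
  induction h with
  | refl ha => exact .refl (hA ha)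
  | tail _ hr hb ih => exact ih.tail hr (hA hb)

theorem target_mem (h : ChainIn r A a b) : b ∈ A := by
  cases h <;> assumption

theorem source_mem (h : ChainIn r A a b) : a ∈ A := by
  induction h <;> assumption

theorem trans {e : α} (h : ChainIn r A a b) (h' : ChainIn r A b e) : ChainIn r A a e := by
  induction h' with
  | refl _ => exact h
  | tail _ hr hb ih => exact ih.tail hr hb

theorem first_visit (h : ChainIn r A a b) (B : Set α) : ChainIn r (A \ B) a b ∨
    ∃ e ∈ B, (e = a ∨ ∃ e', ChainIn r (A \ B) a e' ∧ r e' e) ∧ ChainIn r A e b := by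
  induction h with
  | refl ha =>
    by_cases haB : a ∈ B
    · exact .inr ⟨a, haB, .inl rfl, .refl ha⟩
    · exact .inl (.refl ⟨ha, haB⟩)
  | @tail b b' _ hr hb ih =>
    rcases ih with hchain | ⟨e, he, hfirst, hchain⟩
    · by_cases hbB : b' ∈ B
      · exact .inr ⟨b', hbB, .inr ⟨b, hchain, hr⟩, .refl hb⟩
      · exact .inl (hchain.tail hr ⟨hb, hbB⟩)
    · exact .inr ⟨e, he, hfirst, hchain.tail hr hb⟩

theorem last_visit (h : ChainIn r A a b) (ha : a ∈ B) :
    ∃ f ∈ B, ChainIn r A a f ∧ Relation.ReflTransGen (ReturnStep r A B) a f ∧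
      (f = b ∨ ∃ f', r f f' ∧ ChainIn r (A \ B) f' b) := by
  induction h with
  | refl haA => exact ⟨a, ha, .refl haA, .refl, .inl rfl⟩
  | @tail b b' hab hr hb ih =>
    obtain ⟨f, hf, hchain, hreturn, hlast⟩ := ih
    by_cases hbB : b' ∈ B
    · refine ⟨b', hbB, hab.tail hr hb, hreturn.tail ⟨hf, hbB, ?_⟩, .inl rfl⟩
      rcases hlast with rfl | ⟨f', hr', hout⟩
      · exact .inl hr
      · exact .inr ⟨f', b, hr', hout, hr⟩
    · refine ⟨f, hf, hchain, hreturn, .inr ?_⟩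
      rcases hlast with rfl | ⟨f', hr', hout⟩
      · exact ⟨b', hr, .refl ⟨hb, hbB⟩⟩
      · exact ⟨f', hr', hout.tail hr ⟨hb, hbB⟩⟩

end ChainIn

/-- The one-step relation of a VASS, without any restriction on the configurations. -/
def Step {d : ℕ} (T : Finset (Trans d)) (c c' : Config d) : Prop :=
  ∃ z, (c.1, z, c'.1) ∈ T ∧ c'.2 = c.2 + z

/-- The configurations with state in `Q` and nonnegative coordinates. -/
def valid (d : ℕ) (Q : Finset ℕ) : Set (Config d) := {c | c.1 ∈ Q ∧ c.2 ∈ NatSet d}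

section Steps

variable {d : ℕ} {T : Finset (Trans d)} {c c' : Config d}

theorem Step.schemeReach {A : Set (Vec d)} (h : Step T c c') (hc : c.2 ∈ A) (hc' : c'.2 ∈ A) :
    SchemeReach T A 0 1 c c' := by
  obtain ⟨p, u⟩ := c
  obtain ⟨q, v⟩ := c'
  obtain ⟨z, hz, rfl⟩ := h
  exact .step hz hc (.nil hc')

theorem Step.abs_sub_le (h : Step T c c') (i : Fin d) : |c'.2 i - c.2 i| ≤ tnorm T := by
  obtain ⟨z, hz, h⟩ := h
  rw [h, Pi.add_apply, add_sub_cancel_left]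
  exact vnorm_le_iff.1 (vnorm_le_tnorm hz) i

theorem Run.chainIn {Q : Finset ℕ} (hT : ∀ t ∈ T, t.1 ∈ Q ∧ t.2.2 ∈ Q) {p q : ℕ} {u v : Vec d}
    {π : List (Trans d)} (h : Run T (NatSet d) p u q v π) (hp : p ∈ Q) :
    ChainIn (Step T) (valid d Q) (p, u) (q, v) := by
  induction π generalizing p u with
  | nil =>
    obtain ⟨rfl, hu, rfl⟩ := run_nil_iff.1 h
    exact .refl ⟨hp, hu⟩
  | cons t π ih =>
    obtain ⟨ht, rfl, hu, hrun⟩ := run_cons_iff.1 h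
    have hchain := ih hrun (hT t ht).2
    have hfirst : ChainIn (Step T) (valid d Q) (t.1, u) (t.1, u) := .refl ⟨hp, hu⟩
    exact (hfirst.tail ⟨t.2.1, ht, rfl⟩ hchain.source_mem).trans hchain

/-- Forgets the coordinates outside `J`, replacing them by `0`. -/
def project (J : Finset (Fin d)) (c : Config d) : Config d := (c.1, J.piecewise c.2 0)

variable {Q : Finset ℕ} {J : Finset (Fin d)} {D : ℕ} {A : Set (Config d)}

theorem project_mem_box (hD : 1 ≤ D) (hc : c ∈ valid d Q) (hJ : ∀ j ∈ J, c.2 j < D) :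
    project J c ∈ box d Q D := by
  refine mem_box.2 ⟨hc.1, fun i => ?_⟩
  by_cases hi : i ∈ J
  · simp only [project, Finset.piecewise_eq_of_mem _ _ _ hi]
    exact ⟨hc.2 i, hJ i hi⟩
  · simp only [project, Finset.piecewise_eq_of_notMem _ _ _ hi]
    exact ⟨le_rfl, Nat.cast_pos.2 hD⟩

theorem ChainIn.exists_walk_project (h : ChainIn (Step T) A c c') (hD : 1 ≤ D)
    (hA : ∀ c ∈ A, c ∈ valid d Q ∧ ∀ j ∈ J, c.2 j < D) :
    ∃ n S, Walk (ProjStep T Q J D) (project J c) (project J c') n (c'.2 - c.2) S := by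
  induction h with
  | refl _ => exact ⟨0, _, (Walk.nil _).copy rfl (sub_self _).symm rfl⟩
  | @tail b b' _ hstep hb ih =>
    obtain ⟨n, S, w⟩ := ih
    obtain ⟨z, hz, hb'⟩ := hstep
    have hproj : ProjStep T Q J D (project J b) z (project J b') := by
      refine ⟨hz, project_mem_box hD (hA b' hb).1 (hA b' hb).2, fun j hj => ?_⟩
      simp only [project, Finset.piecewise_eq_of_mem _ _ _ hj, hb', Pi.add_apply]
    exact ⟨_, _, (w.trans (.cons hproj (.nil _))).copy rfl (by rw [hb']; abel) rfl⟩

end Steps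

theorem ChainIn.schemeReach_of_le {T : Finset (Trans 2)} {Q : Finset ℕ} {J : Finset (Fin 2)}
    {D x : ℕ} {A : Set (Config 2)} {c c' : Config 2} (h : ChainIn (Step T) A c c') (hD : 1 ≤ D)
    (hA : ∀ c ∈ A, c ∈ valid 2 Q ∧ ∀ j ∈ J, c.2 j < D) (hQ : Q.card * D ^ 2 ≤ x)
    (hT : tnorm T ≤ x) (hJ : J.Nonempty ∨ c.1 = c'.1)
    (hc : ∀ j ∉ J, ((2 * (segmentBound x * tnorm T) : ℕ) : ℤ) ≤ c.2 j)
    (hc' : ∀ j ∉ J, ((2 * (segmentBound x * tnorm T) : ℕ) : ℤ) ≤ c'.2 j) :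
    SchemeReach T (NatSet 2) 2 (segmentBound x) c c' ∧
      SchemeReach T (NatSet 2) 0 (segmentBound x +
        (vnorm (c'.2 - c.2) + segmentBound x * tnorm T) * segmentBound x) c c' := by
  obtain ⟨n, S, w⟩ := h.exists_walk_project hD hA
  have hbox : project J c ∈ box 2 Q D :=
    project_mem_box hD (hA c h.source_mem).1 (hA c h.source_mem).2
  have hS : S.card ≤ x :=
    (Finset.card_le_card (w.subset (fun _ _ _ e => e.2.1) hbox)).trans ((card_box Q D).trans_le hQ)
  have hends : project J c = project J c' ∨
      ∃ i, ∀ r l b R, Walk (ProjStep T Q J D) r r l b R → b i = 0 := by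
    rcases J.eq_empty_or_nonempty with rfl | ⟨i, hi⟩
    · exact .inl (Prod.ext (hJ.resolve_left Finset.not_nonempty_empty) (by simp [project]))
    · exact .inr ⟨i, fun r l b R w => w.apply_eq_zero hi⟩
  have htwo := w.exists_twoLoopWalk hS (fun _ _ _ e => (vnorm_le_tnorm e.1).trans hT) hends
  have hfits : Fits J (project J c).2 (2 * (segmentBound x * tnorm T)) c.2 :=
    ⟨fun j hj => (Finset.piecewise_eq_of_mem _ _ _ hj).symm, hc⟩
  have hsum : c.2 + (c'.2 - c.2) = c'.2 := add_sub_cancel _ _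
  have := htwo.schemeReach hbox hfits (by rwa [hsum])
  rwa [hsum] at this

/-! ### Low runs and the elimination of high states -/

section Regions

variable {d : ℕ} {T : Finset (Trans d)} {Q S : Finset ℕ} {c c' : Config d} {D D₁ k k' n n' : ℕ}
  {i j : Fin d}

theorem SchemeReach.of_reflTransGen {A : Set (Vec d)} {R : Config d → Config d → Prop}
    {F : Finset (Config d)} (hF : ∀ c ∈ F, c.2 ∈ A)
    (hR : ∀ c c', R c c' → c' ∈ F ∧ SchemeReach T A 0 n c c') (hc : c ∈ F)
    (h : Relation.ReflTransGen R c c') : SchemeReach T A 0 (F.card * F.card * n) c c' := by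
  let E : Config d → Unit → Config d → Prop := fun a _ b => R a b
  have hwalk : ∃ l g S, Walk E c c' l g S := by
    induction h with
    | refl => exact ⟨_, _, _, .nil _⟩
    | @tail b b' _ hb ih =>
      obtain ⟨l, g, S, w⟩ := ih
      exact ⟨_, _, _, w.trans (.cons (g := ()) hb (.nil _))⟩
  have hE : ∀ a g b, E a g b → b ∈ F := fun a _ b hab => (hR a b hab).1
  have hreach : ∀ {a b : Config d} {l : ℕ} {g : Unit} {S : Finset (Config d)},
      Walk E a b l g S → a ∈ F → SchemeReach T A 0 (l * n) a b := by
    intro a b l g S w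
    induction w with
    | nil a => exact fun ha => .nil (hF a ha)
    | @cons a r b l g _ _ e _ ih =>
      intro _
      rw [add_one_mul, add_comm]
      exact (hR a r e).2.trans (ih (hE a g r e))
  obtain ⟨l, g, S, w⟩ := hwalk
  obtain ⟨l₀, g₀, C, w₀, hl₀, -, -⟩ := w.exists_skeleton
  have hS : S.card ≤ F.card := Finset.card_le_card (w.subset hE hc)
  exact (hreach w₀ hc).mono le_rfl (Nat.mul_le_mul_right n (hl₀.trans (Nat.mul_le_mul hS hS)))

/-- The configurations all of whose coordinates are at least `D`. -/
def high (d D : ℕ) : Set (Config d) := {c | ∀ i, (D : ℤ) ≤ c.2 i}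

/-- The valid configurations with some coordinate below `D`. -/
def low (d : ℕ) (Q : Finset ℕ) (D : ℕ) : Set (Config d) := valid d Q \ high d D

/-- The configurations with a small `i`-th coordinate and all other coordinates large. -/
def arm (Q : Finset ℕ) (D D₁ : ℕ) (i : Fin d) : Set (Config d) :=
  {c | c ∈ valid d Q ∧ c.2 i < D ∧ ∀ j ≠ i, (D₁ : ℤ) ≤ c.2 j}

/-- The valid configurations that may be high only in a state of `S`. -/
def highIn (d : ℕ) (Q : Finset ℕ) (D : ℕ) (S : Finset ℕ) : Set (Config d) :=
  {c | c ∈ valid d Q ∧ (c ∈ high d D → c.1 ∈ S)}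

theorem arm_eq_of_step (hD : D + tnorm T ≤ D₁) (hc : c ∈ arm Q D D₁ i) (hc' : c' ∈ arm Q D D₁ j)
    (hstep : Step T c c') : i = j := by
  by_contra hij
  have hlow := hc.2.1
  have hlarge := hc'.2.2 i hij
  have hdiff := abs_le.1 (hstep.abs_sub_le i)
  omega

theorem vnorm_sub_le_of_steps {a b : Config d} (ha : a ∈ box d Q D) (hb : b ∈ box d Q D)
    (hac : Step T a c) (hcb : Step T c' b) (hc : c ∈ valid d Q) (hc' : c' ∈ valid d Q) :
    vnorm (c'.2 - c.2) ≤ D + tnorm T := by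
  refine vnorm_le_iff.2 fun i => abs_le.2 ?_
  have hai := (mem_box.1 ha).2 i
  have hbi := (mem_box.1 hb).2 i
  have hstep := abs_le.1 (hac.abs_sub_le i)
  have hstep' := abs_le.1 (hcb.abs_sub_le i)
  have hci := hc.2 i
  have hci' := hc'.2 i
  rw [Pi.sub_apply]
  omega

/-- Induction on the set of high states: between its first and its last high visit to a state, a run
is replaced by a single scheme, and afterwards that state is not visited high any more. -/
theorem ChainIn.schemeReach_highIn
    (hlow : ∀ c c', ChainIn (Step T) (low d Q D) c c' →
      SchemeReach T (NatSet d) k n c c')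
    (hhigh : ∀ c c', ChainIn (Step T) (valid d Q) c c' → c ∈ high d D → c' ∈ high d D →
      c.1 = c'.1 → SchemeReach T (NatSet d) k' n' c c')
    (h : ChainIn (Step T) (highIn d Q D S) c c') :
    SchemeReach T (NatSet d) (k + (k + k') * S.card) ((n + n' + 2) * (S.card + 1)) c c' := by
  induction hm : S.card generalizing S c with
  | zero =>
    obtain rfl := Finset.card_eq_zero.1 hm
    have hsub : highIn d Q D ∅ ⊆ low d Q D := fun a ha =>
      ⟨ha.1, fun hhi => Finset.notMem_empty _ (ha.2 hhi)⟩
    exact (hlow c c' (h.mono hsub)).mono (by omega) (by omega)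
  | succ m ih =>
    have hk : (k + k') * (m + 1) = k + k' + (k + k') * m := by ring
    have hn : (n + n' + 2) * (m + 1 + 1) = n + n' + 2 + (n + n' + 2) * (m + 1) := by ring
    have hsub : highIn d Q D S \ high d D ⊆ low d Q D := fun a ha => ⟨ha.1.1, ha.2⟩
    rcases h.first_visit (high d D) with hnone | ⟨e, he, hfirst, hrest⟩
    · exact (hlow c c' (hnone.mono hsub)).mono (by omega) (by omega)
    have heA := hrest.source_mem
    have htoFirst : SchemeReach T (NatSet d) k (n + 1) c e := by
      rcases hfirst with rfl | ⟨e', hchain, hstep⟩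
      · exact .nil heA.1.2
      · exact (hlow c e' (hchain.mono hsub)).trans
          (hstep.schemeReach hchain.target_mem.1.1.2 heA.1.2)
    obtain ⟨f, ⟨hf, hfe⟩, hef, -, hlast⟩ :=
      hrest.last_visit (B := {a | a ∈ high d D ∧ a.1 = e.1}) ⟨he, rfl⟩
    have htoLast := htoFirst.trans (hhigh e f (hef.mono fun _ ha => ha.1) he hf hfe.symm)
    rcases hlast with rfl | ⟨f', hstep, hchain⟩
    · exact htoLast.mono (by omega) (by omega)
    · have hsub' : highIn d Q D S \ {a | a ∈ high d D ∧ a.1 = e.1} ⊆ highIn d Q D (S.erase e.1) :=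
        fun a ha => ⟨ha.1.1, fun hhi =>
          Finset.mem_erase.2 ⟨fun hae => ha.2 ⟨hhi, hae⟩, ha.1.2 hhi⟩⟩
      have htail := ih (hchain.mono hsub')
        (by rw [Finset.card_erase_of_mem (heA.2 he), hm, Nat.add_sub_cancel])
      have hexit := hstep.schemeReach hef.target_mem.1.2 hchain.source_mem.1.1.2
      exact ((htoLast.trans hexit).trans htail).mono (by omega) (by omega)

end Regions

section LowRuns

variable {T : Finset (Trans 2)} {Q : Finset ℕ} {c c' : Config 2} {D D₁ P N : ℕ}

theorem exists_mem_arm (hD : D ≤ D₁) (hc : c ∈ low 2 Q D \ box 2 Q D₁) :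
    ∃ i, c ∈ arm Q D D₁ i := by
  obtain ⟨⟨hvalid, hhigh⟩, hbox⟩ := hc
  obtain ⟨i, hi⟩ : ∃ i, c.2 i < D := by
    by_contra! hlarge
    exact hhigh hlarge
  obtain ⟨j, hj⟩ : ∃ j, (D₁ : ℤ) ≤ c.2 j := by
    by_contra! hsmall
    exact hbox (mem_box.2 ⟨hvalid.1, fun j => ⟨hvalid.2 j, hsmall j⟩⟩)
  refine ⟨i, hvalid, hi, fun k hk => ?_⟩
  have hji : j ≠ i := by
    rintro rfl
    omega
  rwa [show k = j by omega]

theorem ChainIn.exists_arm (hD : D + tnorm T ≤ D₁)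
    (h : ChainIn (Step T) (low 2 Q D \ box 2 Q D₁) c c') :
    ∃ i, ChainIn (Step T) (arm Q D D₁ i) c c' := by
  have harm : ∀ {a : Config 2}, a ∈ low 2 Q D \ box 2 Q D₁ → ∃ i, a ∈ arm Q D D₁ i :=
    exists_mem_arm (Nat.le_of_add_right_le hD)
  induction h with
  | refl hc =>
    obtain ⟨i, hi⟩ := harm hc
    exact ⟨i, .refl hi⟩
  | tail _ hstep hb ih =>
    obtain ⟨i, hchain⟩ := ih
    obtain ⟨j, hj⟩ := harm hb
    obtain rfl := arm_eq_of_step hD hchain.target_mem hj hstep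
    exact ⟨i, hchain.tail hstep hj⟩

theorem ReturnStep.schemeReach (hD : D + tnorm T ≤ D₁)
    (hshort : ∀ i c c', ChainIn (Step T) (arm Q D D₁ i) c c' →
      vnorm (c'.2 - c.2) ≤ D₁ + tnorm T → SchemeReach T (NatSet 2) 0 N c c')
    (h : ReturnStep (Step T) (low 2 Q D) (box 2 Q D₁) c c') :
    SchemeReach T (NatSet 2) 0 (N + 2) c c' := by
  obtain ⟨hc, hc', hstep | ⟨a, b, hca, hchain, hbc'⟩⟩ := h
  · exact (hstep.schemeReach (mem_natSet_of_mem_box hc) (mem_natSet_of_mem_box hc')).mono le_rfl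
      (by omega)
  · obtain ⟨i, harm⟩ := hchain.exists_arm hD
    have ha := harm.source_mem.1
    have hb := harm.target_mem.1
    have hmiddle := hshort i a b harm (vnorm_sub_le_of_steps hc hc' hca hbc' ha hb)
    exact (((hca.schemeReach (mem_natSet_of_mem_box hc) ha.2).trans hmiddle).trans
      (hbc'.schemeReach hb.2 (mem_natSet_of_mem_box hc'))).mono le_rfl (by omega)

theorem ChainIn.schemeReach_low (hD : D + tnorm T ≤ D₁)
    (hlong : ∀ i c c', ChainIn (Step T) (arm Q D D₁ i) c c' → SchemeReach T (NatSet 2) 2 P c c')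
    (hshort : ∀ i c c', ChainIn (Step T) (arm Q D D₁ i) c c' →
      vnorm (c'.2 - c.2) ≤ D₁ + tnorm T → SchemeReach T (NatSet 2) 0 N c c')
    (h : ChainIn (Step T) (low 2 Q D) c c') :
    SchemeReach T (NatSet 2) 4
      (P + 1 + Q.card * D₁ ^ 2 * (Q.card * D₁ ^ 2) * (N + 2) + (P + 1)) c c' := by
  have houtside : ∀ {a b}, ChainIn (Step T) (low 2 Q D \ box 2 Q D₁) a b →
      SchemeReach T (NatSet 2) 2 P a b := fun hab =>
    (hab.exists_arm hD).elim fun i harm => hlong i _ _ harm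
  rcases h.first_visit ↑(box 2 Q D₁) with hnone | ⟨e, he, hfirst, hrest⟩
  · exact (houtside hnone).mono (by omega) (by omega)
  have htoFirst : SchemeReach T (NatSet 2) 2 (P + 1) c e := by
    rcases hfirst with rfl | ⟨e', hchain, hstep⟩
    · exact .nil (mem_natSet_of_mem_box he)
    · exact (houtside hchain).trans
        (hstep.schemeReach hchain.target_mem.1.1.2 (mem_natSet_of_mem_box he))
  obtain ⟨f, hf, -, hreturns, hlast⟩ := hrest.last_visit he
  have hmiddle := SchemeReach.of_reflTransGen (fun _ ha => mem_natSet_of_mem_box ha)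
    (fun _ _ hab => ⟨hab.2.1, hab.schemeReach hD hshort⟩) he hreturns
  rw [card_box] at hmiddle
  have hfromLast : SchemeReach T (NatSet 2) 2 (P + 1) f c' := by
    rcases hlast with rfl | ⟨f', hstep, hchain⟩
    · exact .nil (mem_natSet_of_mem_box hf)
    · exact ((hstep.schemeReach (mem_natSet_of_mem_box hf) hchain.source_mem.1.1.2).trans
        (houtside hchain)).mono (by omega) (by omega)
  exact (htoFirst.trans hmiddle).trans hfromLast

end LowRuns

/-! ### The bounds for a 2-VASS -/

/-- Above this threshold both coordinates of a run of a VASS with `|Q| + ‖T‖ = x` count as high. -/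
def highBound (x : ℕ) : ℕ := 2 * (segmentBound x * x) + 1

/-- Bounds the number of vertices of the graph of `ProjStep` when one coordinate is kept below
`highBound x`. -/
def armSize (x : ℕ) : ℕ := x * highBound x ^ 2 + x

/-- The side of the box inside which both coordinates of a low run may be small. -/
def boxBound (x : ℕ) : ℕ := 2 * (segmentBound (armSize x) * x) + highBound x + x

/-- Bounds the length of an excursion of a low run between two visits to the box. -/
def excursionBound (x : ℕ) : ℕ :=
  segmentBound (armSize x) + (boxBound x + x + segmentBound (armSize x) * x) *
    segmentBound (armSize x)

/-- Bounds the length of the schemes for low runs. -/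
def lowBound (x : ℕ) : ℕ :=
  segmentBound (armSize x) + 1 +
    x * boxBound x ^ 2 * (x * boxBound x ^ 2) * (excursionBound x + 2) +
    (segmentBound (armSize x) + 1)

/-- Bounds the length of the schemes for arbitrary runs. -/
def schemeBound (x : ℕ) : ℕ := (lowBound x + segmentBound x + 2) * (x + 1)

theorem polyBounded_schemeBound : PolyBounded schemeBound := by
  unfold schemeBound lowBound excursionBound boxBound armSize highBound
  fun_prop

section Bounds

variable {T : Finset (Trans 2)} {Q : Finset ℕ} {c c' : Config 2} {x : ℕ}

theorem ChainIn.schemeReach_arm (hQ : Q.card ≤ x) (hT : tnorm T ≤ x) {i : Fin 2}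
    (h : ChainIn (Step T) (arm Q (highBound x) (boxBound x) i) c c') :
    SchemeReach T (NatSet 2) 2 (segmentBound (armSize x)) c c' ∧
      SchemeReach T (NatSet 2) 0 (segmentBound (armSize x) +
        (vnorm (c'.2 - c.2) + segmentBound (armSize x) * tnorm T) * segmentBound (armSize x))
        c c' := by
  have hcard : Q.card * highBound x ^ 2 ≤ armSize x :=
    (Nat.mul_le_mul_right _ hQ).trans (Nat.le_add_right _ _)
  have hbound : 2 * (segmentBound (armSize x) * tnorm T) ≤ boxBound x := by
    have := Nat.mul_le_mul_left (segmentBound (armSize x)) hT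
    unfold boxBound
    omega
  have hlarge : ∀ a ∈ arm Q (highBound x) (boxBound x) i, ∀ j ∉ ({i} : Finset (Fin 2)),
      ((2 * (segmentBound (armSize x) * tnorm T) : ℕ) : ℤ) ≤ a.2 j := fun a ha j hj =>
    (Nat.cast_le.2 hbound).trans (ha.2.2 j (Finset.notMem_singleton.1 hj))
  refine h.schemeReach_of_le (J := {i}) (Nat.le_add_left 1 _) (fun a ha => ⟨ha.1, fun j hj => ?_⟩)
    hcard (hT.trans (Nat.le_add_left _ _)) (.inl (Finset.singleton_nonempty i))
    (hlarge c h.source_mem) (hlarge c' h.target_mem)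
  rw [Finset.mem_singleton.1 hj]
  exact ha.2.1

theorem ChainIn.schemeReach_lowBound (hQ : Q.card ≤ x) (hT : tnorm T ≤ x)
    (h : ChainIn (Step T) (low 2 Q (highBound x)) c c') :
    SchemeReach T (NatSet 2) 4 (lowBound x) c c' := by
  have hbound : highBound x + tnorm T ≤ boxBound x := by
    unfold boxBound
    omega
  refine (h.schemeReach_low (N := excursionBound x) hbound
    (fun i a b hab => (hab.schemeReach_arm hQ hT).1)
    (fun i a b hab hnorm => (hab.schemeReach_arm hQ hT).2.mono le_rfl ?_)).mono le_rfl ?_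
  · have := hnorm.trans (Nat.add_le_add_left hT _)
    unfold excursionBound
    gcongr
  · unfold lowBound
    gcongr

theorem ChainIn.schemeReach_high (hQ : Q.card ≤ x) (hT : tnorm T ≤ x)
    (h : ChainIn (Step T) (valid 2 Q) c c') (hc : c ∈ high 2 (highBound x))
    (hc' : c' ∈ high 2 (highBound x)) (hstate : c.1 = c'.1) :
    SchemeReach T (NatSet 2) 2 (segmentBound x) c c' := by
  have hbound : 2 * (segmentBound x * tnorm T) ≤ highBound x := by
    have := Nat.mul_le_mul_left (segmentBound x) hT
    unfold highBound
    omega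
  exact (h.schemeReach_of_le (J := ∅) le_rfl (fun a ha => ⟨ha, by simp⟩) (by simpa using hQ) hT
    (.inr hstate) (fun j _ => (Nat.cast_le.2 hbound).trans (hc j))
    (fun j _ => (Nat.cast_le.2 hbound).trans (hc' j))).1

theorem ChainIn.schemeReach_schemeBound (hQ : Q.card ≤ x) (hT : tnorm T ≤ x)
    (h : ChainIn (Step T) (valid 2 Q) c c') :
    SchemeReach T (NatSet 2) (4 + 6 * Q.card) (schemeBound x) c c' := by
  have hchain : ChainIn (Step T) (highIn 2 Q (highBound x) Q) c c' :=
    h.mono fun _ ha => ⟨ha, fun _ => ha.1⟩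
  refine (hchain.schemeReach_highIn (fun _ _ hab => hab.schemeReach_lowBound hQ hT)
    (fun _ _ hab ha hb hstate => hab.schemeReach_high hQ hT ha hb hstate)).mono le_rfl ?_
  unfold schemeBound
  gcongr

end Bounds

theorem ChainIn.eq_of_card_add_tnorm_le_one {d : ℕ} {T : Finset (Trans d)} {Q : Finset ℕ}
    {c c' : Config d} (h : ChainIn (Step T) (valid d Q) c c') (hX : Q.card + tnorm T ≤ 1) :
    c = c' := by
  induction h with
  | refl _ => rfl
  | @tail b b' hb hstep hb' ih =>
    have hcard : 0 < Q.card := Finset.card_pos.2 ⟨_, hb'.1⟩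
    have hstate : b.1 = b'.1 := Finset.card_le_one.1 (by omega) _ hb.target_mem.1 _ hb'.1
    have hvec : b.2 = b'.2 := funext fun i => by
      have := abs_le.1 (hstep.abs_sub_le i)
      omega
    exact ih.trans (Prod.ext hstate hvec)

theorem finite_setOf_length_le_of_forall_mem {α : Type*} {s : Set α} (hs : s.Finite) (n : ℕ) :
    {l : List α | l.length ≤ n ∧ ∀ a ∈ l, a ∈ s}.Finite := by
  have := hs.to_subtype
  refine ((List.finite_length_le s n).image (List.map Subtype.val)).subset ?_
  rintro l ⟨hlen, hl⟩
  lift l to List s using hl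
  exact ⟨l, by simpa using hlen, rfl⟩

theorem finite_setOf_isLPSFrom {d : ℕ} (T : Finset (Trans d)) (n k : ℕ) :
    {ρ : LPS d | (∃ p q, IsLPSFrom T p q ρ) ∧ lpsLen ρ ≤ n ∧ numCycles ρ ≤ k}.Finite := by
  have hwords := finite_setOf_length_le_of_forall_mem T.finite_toSet n
  refine (hwords.prod (finite_setOf_length_le_of_forall_mem (hwords.prod hwords) k)).subset ?_
  rintro ρ ⟨⟨p, q, hT, -, -⟩, hlen, hcycles⟩
  have hword : ∀ α : List (Trans d), α.Sublist (lpsSupport ρ) →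
      α.length ≤ n ∧ ∀ t ∈ α, t ∈ (T : Set (Trans d)) := fun α hα =>
    ⟨hα.length_le.trans hlen, fun t ht => hT t (hα.subset ht)⟩
  have hpair : ∀ s ∈ ρ.2, (s.1 ++ s.2).Sublist (lpsSupport ρ) := fun s hs =>
    (List.sublist_flatten_of_mem (List.mem_map_of_mem (f := fun s => s.1 ++ s.2) hs)).trans
      (List.sublist_append_right _ _)
  exact ⟨hword _ (List.sublist_append_left _ _), hcycles, fun s hs =>
    ⟨hword _ ((List.sublist_append_left _ _).trans (hpair s hs)),
      hword _ ((List.sublist_append_right _ _).trans (hpair s hs))⟩⟩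

theorem exists_schemeReach_pow : ∃ e : ℕ, ∀ (Q : Finset ℕ) (T : Finset (Trans 2)) (c c' : Config 2),
    ChainIn (Step T) (valid 2 Q) c c' →
      SchemeReach T (NatSet 2) (10 * Q.card) ((Q.card + tnorm T) ^ e) c c' := by
  obtain ⟨e, he⟩ := polyBounded_schemeBound.exists_le_pow
  refine ⟨e, fun Q T c c' h => ?_⟩
  by_cases hX : 2 ≤ Q.card + tnorm T
  · have hcard : 0 < Q.card := Finset.card_pos.2 ⟨_, h.source_mem.1⟩
    exact (h.schemeReach_schemeBound (Nat.le_add_right _ _) (Nat.le_add_left _ _)).mono (by omega)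
      (he _ hX)
  · obtain rfl := h.eq_of_card_add_tnorm_le_one (by omega)
    exact .nil h.source_mem.2

theorem statement0_general :
    ∃ c₁ c₂ : ℕ, ∀ (Q : Finset ℕ) (T : Finset (Trans 2)),
      (∀ t ∈ T, t.1 ∈ Q ∧ t.2.2 ∈ Q) →
      ∃ S : Finset (LPS 2),
        (∀ ρ ∈ S, ∃ p q, IsLPSFrom T p q ρ) ∧
        (∀ p ∈ Q, ∀ (q : ℕ) (u v : Vec 2),
          Reach T (NatSet 2) p u q v ↔ SReach T S (NatSet 2) p u q v) ∧
        (∀ ρ ∈ S, lpsLen ρ ≤ (Q.card + tnorm T) ^ c₁) ∧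
        (∀ ρ ∈ S, numCycles ρ ≤ c₂ * Q.card) := by
  obtain ⟨e, he⟩ := exists_schemeReach_pow
  refine ⟨e, 10, fun Q T hT => ?_⟩
  have hfinite := finite_setOf_isLPSFrom T ((Q.card + tnorm T) ^ e) (10 * Q.card)
  have hmem := fun {ρ} => hfinite.mem_toFinset (a := ρ)
  refine ⟨hfinite.toFinset, fun ρ hρ => (hmem.1 hρ).1, fun p hp q u v => ⟨?_, ?_⟩,
    fun ρ hρ => (hmem.1 hρ).2.1, fun ρ hρ => (hmem.1 hρ).2.2⟩
  · rintro ⟨π, hπ⟩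
    obtain ⟨ρ, π', hρ, hlen, hcycles, hlang, hrun⟩ := (he Q T _ _ (hπ.chainIn hT hp)).exists_lps
    exact ⟨ρ, hmem.2 ⟨⟨p, q, hρ⟩, hlen, hcycles⟩, π', hlang, hrun⟩
  · rintro ⟨_, -, π, -, hπ⟩
    exact ⟨π, hπ⟩

/-- The reachability relation of any 2-VASS is captured by a
finite set of linear path schemes of polynomial length with quadratically many
cycles. -/
theorem statement0 :
    ∃ c₁ c₂ : ℕ, ∀ (Q : Finset ℕ) (T : Finset (Trans 2)),
      (∀ t ∈ T, t.1 ∈ Q ∧ t.2.2 ∈ Q) →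
      ∃ S : Finset (LPS 2),
        (∀ ρ ∈ S, ∃ p q, IsLPSFrom T p q ρ) ∧
        (∀ p ∈ Q, ∀ q ∈ Q, ∀ u v : Vec 2, u ∈ NatSet 2 → v ∈ NatSet 2 →
          (Reach T (NatSet 2) p u q v ↔ SReach T S (NatSet 2) p u q v)) ∧
        (∀ ρ ∈ S, lpsLen ρ ≤ (Q.card + tnorm T) ^ c₁) ∧
        (∀ ρ ∈ S, numCycles ρ ≤ c₂ * Q.card ^ 2) := by
  obtain ⟨c₁, c₂, h⟩ := statement0_general
  refine ⟨c₁, c₂, fun Q T hT => ?_⟩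
  obtain ⟨S, hlps, hreach, hlen, hcycles⟩ := h Q T hT
  exact ⟨S, hlps, fun p hp q _ u v _ _ => hreach p hp q u v, hlen, fun ρ hρ =>
    (hcycles ρ hρ).trans (Nat.mul_le_mul_left c₂ (Nat.le_self_pow two_ne_zero _))⟩

end VASS
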